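/- arXiv:0801.4288 — 3 statements merged into one kernel-verified Lean document; each statement's English description precedes it below -/
import Mathlib

section
/- Let S = ℂ[x₀,…,xₙ] and suppose there exist homogeneous forms F₁,…,Fᵣ of degrees a₁,…,aᵣ and G₁,…,Gᵣ of degrees d−a₁,…,d−aᵣ such that (F₁,G₁)_d + ⋯ + (Fᵣ,Gᵣ)_d = S_d. Then the polynomial map (S_{a₁} × S_{d−a₁}) × ⋯ × (S_{aᵣ} × S_{d−aᵣ}) → S_d, ((Pᵢ,Qᵢ))ᵢ ↦ ∑ PᵢQᵢ, is dominant, i.e. its image contains a nonempty Zariski-open subset of S_d. -/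
open MvPolynomial

/-- If the algebra map `Y j ↦ f j` between complex polynomial rings is injective, then the
polynomial map `x ↦ (f j x)ⱼ` hits every point outside a proper hypersurface. -/
theorem MvPolynomial.exists_ne_zero_forall_exists_eval_eq {σ τ : Type*} [Finite σ] [Finite τ]
    (f : τ → MvPolynomial σ ℂ)
    (hf : Function.Injective (aeval (R := ℂ) f)) :
    ∃ p : MvPolynomial τ ℂ, p ≠ 0 ∧
      ∀ y : τ → ℂ, eval y p ≠ 0 → ∃ x : σ → ℂ, ∀ j, eval x (f j) = y j := by
  let φ : MvPolynomial τ ℂ →+* MvPolynomial σ ℂ := (aeval (R := ℂ) f).toRingHom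
  have hφ : φ.FinitePresentation := by
    apply RingHom.FinitePresentation.of_finiteType.mp
    apply RingHom.FiniteType.of_comp_finiteType (f := (C : ℂ →+* MvPolynomial τ ℂ))
    have : φ.comp C = algebraMap ℂ (MvPolynomial σ ℂ) := (aeval (R := ℂ) f).comp_algebraMap
    rw [this, RingHom.finiteType_algebraMap]
    infer_instance
  obtain ⟨S, hS⟩ := PrimeSpectrum.exists_constructibleSetData_iff.mpr
    (PrimeSpectrum.isConstructible_range_comap hφ)
  have hbot : (⊥ : PrimeSpectrum (MvPolynomial τ ℂ)) ∈ S.toSet := by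
    rw [hS]
    refine ⟨⊥, ?_⟩
    ext p
    change φ p = 0 ↔ p = 0
    exact map_eq_zero_iff φ hf
  simp only [PrimeSpectrum.ConstructibleSetData.toSet, Set.mem_iUnion,
    PrimeSpectrum.BasicConstructibleSetData.toSet, Set.mem_sdiff, PrimeSpectrum.mem_zeroLocus,
    Set.singleton_subset_iff] at hbot
  obtain ⟨D, hD, hg, hD0⟩ := hbot
  refine ⟨D.f, fun h => hD0 ?_, fun y hy => ?_⟩
  · rw [h]
    exact zero_mem _
  let m : PrimeSpectrum (MvPolynomial τ ℂ) := ⟨vanishingIdeal ℂ {y}, inferInstance⟩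
  have hm : m ∈ Set.range (PrimeSpectrum.comap φ) := by
    rw [← hS]
    refine Set.mem_biUnion hD ⟨fun z hz => ?_, fun h => hy ?_⟩
    · have : z = 0 := hg hz
      rw [this]
      exact zero_mem _
    · simpa [m, aeval_eq_eval] using h
  obtain ⟨q, hq⟩ := hm
  obtain ⟨M, hM, hqM⟩ := q.asIdeal.exists_le_maximal q.2.ne_top
  obtain ⟨x, rfl⟩ := isMaximal_iff_eq_vanishingIdeal_singleton.mp hM
  refine ⟨x, fun j => ?_⟩
  have hj : (X j - C (y j) : MvPolynomial τ ℂ) ∈ m.asIdeal := by simp [m]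
  rw [← hq] at hj
  have := hqM hj
  rw [mem_vanishingIdeal_singleton_iff] at this
  simpa [φ, sub_eq_zero, aeval_eq_eval] using this

/-- A complex polynomial vanishing near a point is zero. -/
theorem MvPolynomial.eq_zero_of_eventually_eval_eq_zero {τ : Type*} [Finite τ]
    (p : MvPolynomial τ ℂ) (y : τ → ℂ) (h : ∀ᶠ z in nhds y, eval z p = 0) : p = 0 := by
  rw [nhds_pi, Filter.Eventually, Filter.mem_pi] at h
  obtain ⟨I, -, t, ht, hsub⟩ := h
  refine funext_set t (fun j => infinite_of_mem_nhds (y j) (ht j)) fun z hz => ?_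
  rw [map_zero]
  exact hsub fun i _ => hz i trivial

/-- If the differential `y ↦ B x₀ y + B y x₀` of the quadratic map `x ↦ B x x` is surjective at
some point, then this map hits every point outside a proper hypersurface. -/
theorem LinearMap.exists_ne_zero_forall_exists_apply_self_eq {σ τ : Type*} [Finite σ] [Finite τ]
    (B : (σ → ℂ) →ₗ[ℂ] (σ → ℂ) →ₗ[ℂ] (τ → ℂ)) (x₀ : σ → ℂ)
    (hB : ∀ w, ∃ y, B x₀ y + B y x₀ = w) :
    ∃ p : MvPolynomial τ ℂ, p ≠ 0 ∧ ∀ y : τ → ℂ, eval y p ≠ 0 → ∃ x, B x x = y := by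
  classical
  cases nonempty_fintype σ
  cases nonempty_fintype τ
  let f : τ → MvPolynomial σ ℂ := fun j =>
    ∑ k, ∑ l, C (B (Pi.single k 1) (Pi.single l 1) j) * X k * X l
  have hf : ∀ x j, eval x (f j) = B x x j := by
    intro x j
    conv_rhs => rw [pi_eq_sum_univ' x]
    simp only [f, map_sum, map_mul, eval_C, eval_X, LinearMap.sum_apply, map_smul,
      LinearMap.smul_apply, Finset.sum_apply, Pi.smul_apply, smul_eq_mul]
    rw [Finset.sum_comm]
    refine Finset.sum_congr rfl fun k _ => ?_
    rw [Finset.mul_sum]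
    refine Finset.sum_congr rfl fun l _ => ?_
    ring
  have hinj : Function.Injective (aeval (R := ℂ) f) := by
    rw [injective_iff_map_eq_zero]
    intro p hp
    let B' := B.toContinuousBilinearMap
    have hd : HasStrictFDerivAt (fun x => B' x x) _ x₀ :=
      (B'.hasStrictFDerivAt_of_bilinear (hasStrictFDerivAt_id x₀) (hasStrictFDerivAt_id x₀))
    have hmap := hd.map_nhds_eq_of_surj (by
      rw [LinearMap.range_eq_top]
      intro w
      obtain ⟨y, hy⟩ := hB w
      exact ⟨y, by simpa [B'] using hy⟩)
    refine eq_zero_of_eventually_eval_eq_zero p (B' x₀ x₀) ?_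
    rw [← hmap, Filter.eventually_map]
    refine Filter.Eventually.of_forall fun x => ?_
    have h := congrArg (eval x) hp
    rw [map_zero, ← aeval_eq_eval, ← AlgHom.comp_apply, comp_aeval] at h
    rw [← h, ← aeval_eq_eval]
    congr 2
    funext j
    exact (hf x j).symm
  obtain ⟨p, hp, h⟩ := exists_ne_zero_forall_exists_eval_eq f hinj
  refine ⟨p, hp, fun y hy => ?_⟩
  obtain ⟨x, hx⟩ := h y hy
  exact ⟨x, funext fun j => by rw [← hf, hx]⟩

/-- Coordinate-free form of `LinearMap.exists_ne_zero_forall_exists_apply_self_eq`. -/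
theorem LinearMap.exists_aeval_dual_ne_zero_forall_exists_apply_self_eq {V W : Type*}
    [AddCommGroup V] [Module ℂ V] [Module.Finite ℂ V]
    [AddCommGroup W] [Module ℂ W] [Module.Finite ℂ W]
    (B : V →ₗ[ℂ] V →ₗ[ℂ] W) (x₀ : V) (hB : ∀ w, ∃ y, B x₀ y + B y x₀ = w) :
    ∃ p : MvPolynomial (Module.Dual ℂ W) ℂ,
      (∃ w₀ : W, aeval (fun φ : Module.Dual ℂ W => φ w₀) p ≠ 0) ∧
      ∀ w : W, aeval (fun φ : Module.Dual ℂ W => φ w) p ≠ 0 → ∃ x, B x x = w := by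
  let eV := (Module.finBasis ℂ V).equivFun
  let eW := (Module.finBasis ℂ W).equivFun
  obtain ⟨p, hp, h⟩ := exists_ne_zero_forall_exists_apply_self_eq
    ((B.compl₁₂ eV.symm.toLinearMap eV.symm.toLinearMap).compr₂ eW.toLinearMap) (eV x₀) (by
      intro w
      obtain ⟨y, hy⟩ := hB (eW.symm w)
      refine ⟨eV y, ?_⟩
      simp [← map_add, hy])
  have key : ∀ w : W, aeval (fun φ : Module.Dual ℂ W => φ w)
      (rename (Module.finBasis ℂ W).coord p) = eval (eW w) p := by
    intro w
    rw [aeval_rename, ← aeval_eq_eval]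
    rfl
  refine ⟨rename (Module.finBasis ℂ W).coord p, ?_, fun w hw => ?_⟩
  · by_contra! hzero
    refine hp (MvPolynomial.funext fun y => ?_)
    rw [map_zero, ← eW.apply_symm_apply y, ← key, hzero]
  · rw [key] at hw
    obtain ⟨x, hx⟩ := h _ hw
    exact ⟨eV.symm x, eW.injective (by simpa using hx)⟩

/-- The bilinear map `((Pᵢ, _), (_, Qᵢ)) ↦ ∑ Pᵢ Qᵢ` on homogeneous forms, with `deg Pᵢ = aᵢ` and
`deg Qᵢ = d - aᵢ`. -/
noncomputable def MvPolynomial.sumMulHomogeneous {σ ι R : Type*} [Fintype ι] [CommRing R]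
    (d : ℕ) (a : ι → ℕ) (hda : ∀ i, a i ≤ d) :
    (∀ i, homogeneousSubmodule σ R (a i) × homogeneousSubmodule σ R (d - a i)) →ₗ[R]
    (∀ i, homogeneousSubmodule σ R (a i) × homogeneousSubmodule σ R (d - a i)) →ₗ[R]
      homogeneousSubmodule σ R d :=
  LinearMap.mk₂ R
    (fun x y => ⟨∑ i, ((x i).1 : MvPolynomial σ R) * ((y i).2 : MvPolynomial σ R),
      Submodule.sum_mem _ fun i _ => by
        have h := IsHomogeneous.mul (x i).1.2 (y i).2.2
        rwa [Nat.add_sub_cancel' (hda i)] at h⟩)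
    (fun x x' y => Subtype.ext (by simp [add_mul, Finset.sum_add_distrib]))
    (fun c x y => Subtype.ext (by simp [Finset.smul_sum]))
    (fun x y y' => Subtype.ext (by simp [mul_add, Finset.sum_add_distrib]))
    (fun c x y => Subtype.ext (by simp [Finset.smul_sum]))

/-- linear-algebra direction of Lemma 4.2: if there exist homogeneous
forms `Fᵢ` of degree `aᵢ` and `Gᵢ` of degree `d − aᵢ` with
`(F₁,G₁)_d + ⋯ + (F_r,G_r)_d = S_d`, then the sum-of-products map
`((Pᵢ,Qᵢ))ᵢ ↦ ∑ PᵢQᵢ` is dominant onto `S_d`: its image contains the complement of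
the zero locus of a nonzero polynomial function on `S_d` (polynomial functions being
given by polynomials in linear functionals). -/
theorem stmt_15 (n r d : ℕ) (a : Fin r → ℕ) (hda : ∀ i, a i ≤ d)
    (F G : Fin r → MvPolynomial (Fin (n + 1)) ℂ)
    (hF : ∀ i, (F i).IsHomogeneous (a i))
    (hG : ∀ i, (G i).IsHomogeneous (d - a i))
    (hspan : ∀ H : MvPolynomial (Fin (n + 1)) ℂ, H.IsHomogeneous d →
      ∃ u v : Fin r → MvPolynomial (Fin (n + 1)) ℂ,
        (∀ i, (u i).IsHomogeneous (d - a i)) ∧ (∀ i, (v i).IsHomogeneous (a i)) ∧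
        H = ∑ i, (F i * u i + G i * v i)) :
    ∃ p : MvPolynomial
        (Module.Dual ℂ (MvPolynomial.homogeneousSubmodule (Fin (n + 1)) ℂ d)) ℂ,
      (∃ H0 : MvPolynomial.homogeneousSubmodule (Fin (n + 1)) ℂ d,
        MvPolynomial.aeval (fun φ => φ H0) p ≠ 0) ∧
      ∀ H : MvPolynomial.homogeneousSubmodule (Fin (n + 1)) ℂ d,
        MvPolynomial.aeval (fun φ => φ H) p ≠ 0 →
          ∃ P Q : Fin r → MvPolynomial (Fin (n + 1)) ℂ,
            (∀ i, (P i).IsHomogeneous (a i)) ∧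
            (∀ i, (Q i).IsHomogeneous (d - a i)) ∧
            (H : MvPolynomial (Fin (n + 1)) ℂ) = ∑ i, P i * Q i := by
  have hfin : ∀ e, Module.Finite ℂ (homogeneousSubmodule (Fin (n + 1)) ℂ e) := fun e =>
    Module.Finite.iff_fg.mpr (homogeneousSubmodule_fg (Fin (n + 1)) ℂ e)
  obtain ⟨p, hp, h⟩ := LinearMap.exists_aeval_dual_ne_zero_forall_exists_apply_self_eq
    (sumMulHomogeneous (σ := Fin (n + 1)) (R := ℂ) d a hda)
    (fun i => (⟨F i, hF i⟩, ⟨G i, hG i⟩)) (by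
      intro H
      obtain ⟨u, v, hu, hv, huv⟩ := hspan H H.2
      refine ⟨fun i => (⟨v i, hv i⟩, ⟨u i, hu i⟩), Subtype.ext ?_⟩
      rw [huv, Finset.sum_add_distrib]
      simp [sumMulHomogeneous, mul_comm (v _)])
  refine ⟨p, hp, fun H hH => ?_⟩
  obtain ⟨x, hx⟩ := h H hH
  exact ⟨fun i => (x i).1, fun i => (x i).2, fun i => (x i).1.2, fun i => (x i).2.2,
    (congrArg Subtype.val hx).symm⟩
end

section
/- Let d > 2 and r ≤ n. There exist linear forms L₁,…,Lᵣ and degree-(d−1) forms F₁,…,Fᵣ in ℂ[x₀,…,xₙ] such that the degree-d piece of (L₁,…,Lᵣ,F₁,…,Fᵣ) is all of S_d if and only if binom(n−r+d, d) ≤ (n−r+1)r. -/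
open MvPolynomial

lemma mul_succ_le_two_mul_choose (m e : ℕ) (he : 1 ≤ e) :
    m * (m + 1) ≤ 2 * (m + e).choose (e + 1) := by
  rcases m with _ | m
  · simp
  have h1 : (m + 2).choose m ≤ (m + 1 + e).choose m := Nat.choose_le_choose m (by omega)
  have h2 : (m + 1 + e).choose m = (m + 1 + e).choose (e + 1) :=
    Nat.choose_symm_of_eq_add (by omega)
  have h3 : (m + 2).choose m = (m + 2).choose 2 := Nat.choose_symm_of_eq_add (by omega)
  have h4 : (m + 2).choose 2 * 2 = (m + 2) * (m + 1) := by
    rw [Nat.choose_two_right]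
    exact Nat.div_mul_cancel (even_iff_two_dvd.mp (by simpa using Nat.even_mul_pred_self (m + 2)))
  nlinarith

lemma add_mul_le_mul_choose (k j e : ℕ) (hk : 0 < k) (he : 2 ≤ e) :
    (k + j) * (k * j + (k + e).choose (e + 1)) ≤ k * (k + j + e).choose (e + 1) := by
  induction j with
  | zero => simp
  | succ j ih =>
    have h1 := Nat.choose_mul_succ_eq (k + j + e) (e + 1)
    rw [show k + j + e + 1 - (e + 1) = k + j by omega] at h1
    have h2 := mul_succ_le_two_mul_choose (k + j) e (by omega)
    rw [show k + (j + 1) + e = k + j + e + 1 by ring]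
    refine Nat.le_of_mul_le_mul_right (c := k + j) ?_ (by omega)
    rw [mul_assoc k, ← h1]
    have h3 := Nat.mul_le_mul_left (k * (k + j + e).choose (e + 1)) he
    have h4 := Nat.mul_le_mul_left k h2
    have h5 := Nat.mul_le_mul_left (k + j + 1) ih
    linarith

lemma mul_add_choose_le_mul {k m e r : ℕ} (hk : 0 < k) (hkm : k ≤ m) (he : 2 ≤ e)
    (h : (m + e).choose (e + 1) ≤ m * r) :
    k * (m - k) + (k + e).choose (e + 1) ≤ k * r := by
  obtain ⟨j, rfl⟩ := Nat.exists_eq_add_of_le hkm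
  refine le_of_mul_le_mul_left (a := k + j) ?_ (by omega)
  rw [Nat.add_sub_cancel_left]
  have h1 := add_mul_le_mul_choose k j e hk he
  have h2 := Nat.mul_le_mul_left k h
  linarith

section Counting

variable {σ K : Type*} [Field K] {e : ℕ}

/-- If `φ` is a functional on forms of degree `e + 1`, then `contract φ a` is the functional
`f ↦ φ (X a * f)` on forms of degree `e`; both are given by their values on monomials. -/
def contract (φ : Sym σ (e + 1) → K) (a : σ) : Sym σ e → K := fun s => φ (a ::ₛ s)

/-- The functionals whose contractions by the variables in `A` form a basis of the span of all
their contractions. -/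
def functionalsWithBasis (K : Type*) [Field K] (e : ℕ) (A : Finset σ) :
    Set (Sym σ (e + 1) → K) :=
  {φ | LinearIndepOn K (contract φ) (A : Set σ) ∧
    ∀ j, contract φ j ∈ Submodule.span K (contract φ '' (A : Set σ))}

lemma exists_mem_functionalsWithBasis [Fintype σ] {φ : Sym σ (e + 1) → K} (hφ : φ ≠ 0) :
    ∃ A : Finset σ, A.Nonempty ∧ φ ∈ functionalsWithBasis K e A := by
  classical
  obtain ⟨b, -, -, hspan, hli⟩ := exists_linearIndepOn_extension
    (linearIndepOn_empty K (contract φ)) (Set.empty_subset Set.univ)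
  have hmem : φ ∈ functionalsWithBasis K e b.toFinset := by
    refine ⟨by simpa using hli, fun j => ?_⟩
    simpa using hspan ⟨j, trivial, rfl⟩
  refine ⟨b.toFinset, Finset.nonempty_iff_ne_empty.2 fun hb => hφ ?_, hmem⟩
  funext t
  obtain ⟨a, s, rfl⟩ := t.exists_eq_cons_of_succ
  have h := hmem.2 a
  rw [hb, Finset.coe_empty, Set.image_empty, Submodule.span_empty, Submodule.mem_bot] at h
  exact congrFun h s

lemma eq_zero_of_contract_eq_sum {A : Finset σ} {χ : Sym σ (e + 1) → K}
    (c : {j // j ∉ A} → A → K)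
    (hc : ∀ j : {j // j ∉ A}, contract χ j = ∑ a : A, c j a • contract χ a)
    (hA : ∀ w : Sym A (e + 1), χ (w.map Subtype.val) = 0) : χ = 0 := by
  have key : ∀ (l : Multiset σ) (w : Multiset A)
      (h : Multiset.card (l + w.map Subtype.val) = e + 1),
      χ ⟨l + w.map Subtype.val, h⟩ = 0 := by
    intro l
    induction l using Multiset.induction with
    | empty =>
      intro w h
      have := hA ⟨w, by simpa using h⟩
      rw [← this]
      congr 1
      ext1
      simp
    | cons j l ih =>
      intro w h
      have swap : ∀ (a : A), (a : σ) ::ₘ (l + w.map Subtype.val)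
          = l + (a ::ₘ w).map Subtype.val := by intro a; simp
      by_cases hj : j ∈ A
      · have h' : Multiset.card (l + (((⟨j, hj⟩ : A) ::ₘ w).map Subtype.val)) = e + 1 := by
          rw [← swap, ← h, Multiset.cons_add]
        rw [← ih _ h']
        congr 1
        ext1
        simp
      · have hs : Multiset.card (l + w.map Subtype.val) = e := by
          simpa [add_right_comm _ 1, ← add_assoc] using h
        let s : Sym σ e := ⟨l + w.map Subtype.val, hs⟩
        have hsum : contract χ j s = ∑ a : A, c ⟨j, hj⟩ a • contract χ a s :=
          (congrFun (hc ⟨j, hj⟩) s).trans (Finset.sum_apply _ _ _)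
        rw [Finset.sum_eq_zero] at hsum
        · rw [← hsum]
          exact congrArg χ (Subtype.ext (Multiset.cons_add _ _ _))
        · intro a _
          have h' : Multiset.card (l + ((a ::ₘ w).map Subtype.val)) = e + 1 := by
            rw [← swap, Multiset.card_cons, hs]
          have h0 : contract χ (a : σ) s = 0 :=
            (congrArg χ (Subtype.ext (swap a))).trans (ih _ h')
          rw [h0, smul_zero]
  funext t
  have := key t 0 (by simp)
  rw [Pi.zero_apply, ← this]
  congr 1
  ext1
  simp

lemma card_functionalsWithBasis_le [Fintype σ] [DecidableEq σ] [Fintype K] (A : Finset σ) :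
    Nat.card (functionalsWithBasis K e A) ≤
      Fintype.card K ^ (A.card * (Fintype.card σ - A.card) + (A.card + e).choose (e + 1)) := by
  have hcoef : ∀ φ : functionalsWithBasis K e A, ∃ c : {j // j ∉ A} → A → K,
      ∀ j : {j // j ∉ A}, contract φ.1 j = ∑ a : A, c j a • contract φ.1 a := by
    intro φ
    have (j : {j // j ∉ A}) : ∃ c : A → K, contract φ.1 j = ∑ a : A, c a • contract φ.1 a := by
      obtain ⟨c, hc⟩ := (Submodule.mem_span_image_finset_iff_exists_fun K).1 (φ.2.2 j)
      exact ⟨c, hc.symm⟩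
    choose c hc using this
    exact ⟨c, hc⟩
  choose c hc using hcoef
  have hinj : Function.Injective fun φ : functionalsWithBasis K e A =>
      (c φ, fun w : Sym A (e + 1) => φ.1 (w.map Subtype.val)) := by
    intro φ ψ h
    simp only [Prod.mk.injEq] at h
    refine Subtype.ext (sub_eq_zero.1 (eq_zero_of_contract_eq_sum (c φ) (fun j => ?_) ?_))
    · have h1 := hc φ j
      have h2 := hc ψ j
      rw [← h.1] at h2
      have hsub : ∀ a, contract (φ.1 - ψ.1) a = contract φ.1 a - contract ψ.1 a := fun _ => rfl
      simp only [hsub, smul_sub, Finset.sum_sub_distrib, h1, h2]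
    · intro w
      exact sub_eq_zero.2 (congrFun h.2 w)
  refine (Nat.card_le_card_of_injective _ hinj).trans_eq ?_
  rw [Nat.card_eq_fintype_card, Fintype.card_prod, pow_add]
  congr 1
  · rw [Fintype.card_fun, Fintype.card_fun, ← pow_mul, Fintype.card_coe,
      Fintype.card_subtype_compl, Fintype.card_coe]
  · rw [Fintype.card_fun, Sym.card_sym_eq_choose, Fintype.card_coe]
    rfl

/-- Tuples of forms of degree `e` all of whose products with variables are killed by `φ`. -/
def annihilatedTuples (r : ℕ) (φ : Sym σ (e + 1) → K) [Fintype σ] [DecidableEq σ] :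
    Set (Fin r → Sym σ e → K) :=
  {F | ∀ j a, F j ⬝ᵥ contract φ a = 0}

lemma card_annihilatedTuples_mul_le [Fintype σ] [DecidableEq σ] [Fintype K] {A : Finset σ} (r : ℕ)
    {φ : Sym σ (e + 1) → K} (hφ : LinearIndepOn K (contract φ) (A : Set σ)) :
    Nat.card (annihilatedTuples r φ) * Fintype.card K ^ (A.card * r) ≤
      Nat.card (Fin r → Sym σ e → K) := by
  let M : Matrix A (Sym σ e) K := Matrix.of fun a => contract φ a
  have hsurj : Function.Surjective M.mulVec := by
    have hr : LinearIndependent K M.row := hφ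
    have := hr.rank_matrix
    have h2 : LinearMap.range M.mulVecLin = ⊤ := by
      apply Submodule.eq_top_of_finrank_eq
      rw [Module.finrank_fintype_fun_eq_card]
      exact this
    exact LinearMap.range_eq_top.1 h2
  let T : (Fin r → Sym σ e → K) →ₗ[K] (Fin r → A → K) :=
    LinearMap.pi fun j => M.mulVecLin ∘ₗ LinearMap.proj j
  have hT : Function.Surjective T := by
    intro y
    choose x hx using fun j => hsurj (y j)
    exact ⟨x, funext hx⟩
  have hle : Nat.card (annihilatedTuples r φ) ≤ Nat.card (LinearMap.ker T) := by
    refine Nat.card_mono (Set.toFinite _) fun F hF => ?_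
    refine LinearMap.mem_ker.2 ?_
    funext j a
    exact (dotProduct_comm _ _).trans (hF j a)
  rw [(LinearMap.ker T).card_eq_card_quotient_mul_card,
    Nat.card_congr (T.quotKerEquivOfSurjective hT).toEquiv]
  refine Nat.mul_le_mul hle (le_of_eq ?_)
  rw [Nat.card_eq_fintype_card, Fintype.card_fun, Fintype.card_fun, ← pow_mul, Fintype.card_coe,
    Fintype.card_fin]

/-- Over a large finite field, there are `r` forms of degree `e` whose products with the variables
are not all killed by a nonzero functional. -/
lemma exists_tuple_of_card_gt [Fintype σ] [DecidableEq σ] [Fintype K] {r : ℕ} (he : 2 ≤ e)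
    (hr : (Fintype.card σ + e).choose (e + 1) ≤ Fintype.card σ * r)
    (hK : 2 ^ Fintype.card σ + 1 < Fintype.card K) :
    ∃ F : Fin r → Sym σ e → K, ∀ φ : Sym σ (e + 1) → K,
      (∀ j a, F j ⬝ᵥ contract φ a = 0) → φ = 0 := by
  classical
  by_contra! hbad
  choose φ hφ hφ0 using hbad
  let P (A : Finset σ) : Set ((Sym σ (e + 1) → K) × (Fin r → Sym σ e → K)) :=
    {p | p.1 ∈ functionalsWithBasis K e A ∧ p.2 ∈ annihilatedTuples r p.1}
  set N := Nat.card (Fin r → Sym σ e → K) with hN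
  have hNpos : 0 < N := Nat.card_pos
  have hq : 0 < Fintype.card K := Fintype.card_pos
  have hP : ∀ A : Finset σ, A.Nonempty → Nat.card (P A) ≤ N := by
    intro A hA
    let g : P A ≃ Σ φ : functionalsWithBasis K e A, annihilatedTuples r φ.1 :=
      { toFun := fun p => ⟨⟨p.1.1, p.2.1⟩, ⟨p.1.2, p.2.2⟩⟩
        invFun := fun x => ⟨(x.1.1, x.2.1), x.1.2, x.2.2⟩
        left_inv := fun _ => rfl
        right_inv := fun _ => rfl }
    rw [Nat.card_congr g, Nat.card_sigma]
    refine Nat.le_of_mul_le_mul_right (c := Fintype.card K ^ (A.card * r)) ?_ (pow_pos hq _)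
    rw [Finset.sum_mul]
    refine (Finset.sum_le_sum fun φ _ => card_annihilatedTuples_mul_le r φ.2.1).trans ?_
    rw [Finset.sum_const, smul_eq_mul, mul_comm, Finset.card_univ, ← Nat.card_eq_fintype_card]
    refine Nat.mul_le_mul_left _ ((card_functionalsWithBasis_le A).trans ?_)
    exact Nat.pow_le_pow_right hq
      (mul_add_choose_le_mul hA.card_pos (Finset.card_le_univ A) he hr)
  let U : Finset ((Sym σ (e + 1) → K) × (Fin r → Sym σ e → K)) :=
    (Finset.univ.filter Finset.Nonempty).biUnion fun A => (P A).toFinset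
  have hU : U.card ≤ 2 ^ Fintype.card σ * N := by
    refine (Finset.card_biUnion_le_card_mul _ _ N fun A hA => ?_).trans ?_
    · rw [Set.toFinset_card, ← Nat.card_eq_fintype_card]
      exact hP A (Finset.mem_filter.1 hA).2
    · refine Nat.mul_le_mul_right _ ((Finset.card_filter_le _ _).trans ?_)
      rw [Finset.card_univ, Fintype.card_finset]
  let f : (Fin r → Sym σ e → K) × Kˣ → (Sym σ (e + 1) → K) × (Fin r → Sym σ e → K) :=
    fun p => ((p.2 : K) • φ p.1, p.1)
  have hf : Function.Injective f := by
    rintro ⟨F, t⟩ ⟨G, u⟩ h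
    obtain ⟨h1, rfl⟩ : (t : K) • φ F = (u : K) • φ G ∧ F = G := Prod.ext_iff.1 h
    rw [Units.ext (smul_left_injective K (hφ0 F) h1)]
  have hfU : ∀ p, f p ∈ U := by
    rintro ⟨F, t⟩
    have hne : (t : K) • φ F ≠ 0 := smul_ne_zero t.ne_zero (hφ0 F)
    obtain ⟨A, hA, hmem⟩ := exists_mem_functionalsWithBasis hne
    refine Finset.mem_biUnion.2 ⟨A, Finset.mem_filter.2 ⟨Finset.mem_univ _, hA⟩,
      Set.mem_toFinset.2 ⟨hmem, fun j a => ?_⟩⟩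
    have : contract ((t : K) • φ F) a = (t : K) • contract (φ F) a := rfl
    change F j ⬝ᵥ contract ((t : K) • φ F) a = 0
    rw [this, dotProduct_smul, hφ, smul_zero]
  have hcard : N * (Fintype.card K - 1) ≤ U.card := by
    have h := Finset.card_le_card_of_injOn (s := Finset.univ) f (fun p _ => hfU p) hf.injOn
    rwa [Finset.card_univ, Fintype.card_prod, Fintype.card_units, ← Nat.card_eq_fintype_card] at h
  have := hcard.trans hU
  rw [mul_comm] at this
  have := Nat.le_of_mul_le_mul_right this hNpos
  omega

end Counting

lemma exists_mul_eq_one_of_mulVec_injective {α β K : Type*} [Fintype α] [Fintype β] [DecidableEq β]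
    [Field K] {M : Matrix α β K} (h : Function.Injective M.mulVec) :
    ∃ B : Matrix β α K, B * M = 1 := by
  classical
  obtain ⟨g, hg⟩ := M.mulVecLin.exists_leftInverse_of_injective (LinearMap.ker_eq_bot.2 h)
  refine ⟨LinearMap.toMatrix' g, ?_⟩
  rw [← LinearMap.toMatrix'_id, ← hg, LinearMap.toMatrix'_comp]
  congr 1
  exact (LinearMap.toMatrix'_toLin' _).symm

lemma mulVec_injective_of_zmod {α β : Type*} [Fintype α] [Fintype β] (M : Matrix α β ℤ) (p : ℕ)
    [Fact p.Prime] (K : Type*) [Field K] [CharZero K]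
    (h : Function.Injective (M.map (Int.cast : ℤ → ZMod p)).mulVec) :
    Function.Injective (M.map (Int.cast : ℤ → K)).mulVec := by
  classical
  obtain ⟨C, hC⟩ := exists_mul_eq_one_of_mulVec_injective h
  obtain ⟨B, rfl⟩ : ∃ B : Matrix β α ℤ, B.map (Int.cast : ℤ → ZMod p) = C :=
    ⟨C.map fun x => x.val, by ext; simp⟩
  have hBM : (B * M).map (Int.castRingHom (ZMod p)) = 1 := by
    rw [Matrix.map_mul]
    exact hC
  have hdet : (B * M).det ≠ 0 := by
    intro h0
    have h1 := RingHom.map_det (Int.castRingHom (ZMod p)) (B * M)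
    rw [h0, map_zero, RingHom.mapMatrix_apply, hBM, Matrix.det_one] at h1
    exact zero_ne_one h1
  have hunit : IsUnit ((B * M).map (Int.castRingHom K)) := by
    rw [Matrix.isUnit_iff_isUnit_det, ← RingHom.mapMatrix_apply, ← RingHom.map_det,
      isUnit_iff_ne_zero]
    simpa using hdet
  have hinj := Matrix.mulVec_injective_iff_isUnit.2 hunit
  intro x y hxy
  apply hinj
  rw [Matrix.map_mul, ← Matrix.mulVec_mulVec, ← Matrix.mulVec_mulVec]
  exact congrArg _ hxy

/-- The matrix of the map taking a functional `φ` on forms of degree `e + 1` to the values of `φ` at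
the products of the forms `F j` with the variables. -/
def pairingMatrix {σ R : Type*} [DecidableEq σ] [Fintype σ] [Semiring R] {e r : ℕ}
    (F : Fin r → Sym σ e → R) : Matrix (Fin r × σ) (Sym σ (e + 1)) R :=
  Matrix.of fun x t => ∑ s, if x.2 ::ₛ s = t then F x.1 s else 0

lemma pairingMatrix_mulVec {σ K : Type*} [DecidableEq σ] [Fintype σ] [Field K] {e r : ℕ}
    (F : Fin r → Sym σ e → K) (φ : Sym σ (e + 1) → K) (x : Fin r × σ) :
    (pairingMatrix F).mulVec φ x = F x.1 ⬝ᵥ contract φ x.2 := by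
  simp only [Matrix.mulVec, dotProduct, pairingMatrix, Matrix.of_apply, Finset.sum_mul, contract]
  rw [Finset.sum_comm]
  simp

lemma pairingMatrix_map_intCast {σ R : Type*} [DecidableEq σ] [Fintype σ] [Ring R] {e r : ℕ}
    (F : Fin r → Sym σ e → ℤ) :
    (pairingMatrix F).map (Int.cast : ℤ → R) = pairingMatrix fun j s => (F j s : R) := by
  ext x t
  simp [pairingMatrix, Int.cast_sum, apply_ite (Int.cast : ℤ → R)]

/-- **Hochster–Laksov**, spanning case: if `dim S_{e+1} ≤ r * dim S_1`, there are `r` forms of degree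
`e` whose products with the variables are not all killed by a nonzero functional. -/
lemma exists_tuple_forall_eq_zero {σ : Type*} [Fintype σ] [DecidableEq σ] (K : Type*) [Field K]
    [CharZero K] {r e : ℕ} (he : 2 ≤ e)
    (hr : (Fintype.card σ + e).choose (e + 1) ≤ Fintype.card σ * r) :
    ∃ F : Fin r → Sym σ e → K, ∀ φ : Sym σ (e + 1) → K,
      (∀ j a, F j ⬝ᵥ contract φ a = 0) → φ = 0 := by
  obtain ⟨p, hp, hprime⟩ := Nat.exists_infinite_primes (2 ^ Fintype.card σ + 2)
  have : Fact p.Prime := ⟨hprime⟩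
  obtain ⟨F, hF⟩ := exists_tuple_of_card_gt (K := ZMod p) he hr (by rw [ZMod.card]; omega)
  let G : Fin r → Sym σ e → ℤ := fun j s => (F j s).val
  have hG : (fun j s => (G j s : ZMod p)) = F := by
    funext j s
    simp [G]
  have hinj : Function.Injective ((pairingMatrix G).map (Int.cast : ℤ → ZMod p)).mulVec := by
    rw [pairingMatrix_map_intCast, hG]
    refine (injective_iff_map_eq_zero (pairingMatrix F).mulVecLin).2 fun φ hφ => hF φ fun j a => ?_
    rw [← pairingMatrix_mulVec F φ (j, a)]
    exact congrFun hφ (j, a)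
  have hinj' := mulVec_injective_of_zmod _ p K hinj
  rw [pairingMatrix_map_intCast] at hinj'
  refine ⟨fun j s => (G j s : K), fun φ hφ => hinj' ?_⟩
  rw [Matrix.mulVec_zero]
  funext x
  rw [pairingMatrix_mulVec]
  exact hφ x.1 x.2

section Polynomial

variable {τ R : Type*} [DecidableEq τ] [CommSemiring R]

/-- The monic monomial with a given multiset of variables. -/
noncomputable def multisetMonomial (R : Type*) [CommSemiring R] (s : Multiset τ) :
    MvPolynomial τ R :=
  monomial (Multiset.toFinsupp s) 1

lemma multisetMonomial_cons (a : τ) (s : Multiset τ) :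
    multisetMonomial R (a ::ₘ s) = X a * multisetMonomial R s := by
  rw [multisetMonomial, multisetMonomial, ← Multiset.singleton_add, Multiset.toFinsupp_add,
    Multiset.toFinsupp_singleton, X, monomial_mul, one_mul]

lemma multisetMonomial_isHomogeneous (s : Multiset τ) :
    (multisetMonomial R s).IsHomogeneous (Multiset.card s) :=
  isHomogeneous_monomial _ (Multiset.toFinsupp_sum_eq s)

lemma IsHomogeneous.mem_span_multisetMonomial {d : ℕ} {H : MvPolynomial τ R}
    (hH : H.IsHomogeneous d) : H ∈ Submodule.span R
      {f | ∃ s : Multiset τ, Multiset.card s = d ∧ f = multisetMonomial R s} := by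
  rw [H.as_sum]
  refine Submodule.sum_mem _ fun u hu => ?_
  rw [← mul_one (coeff u H), ← smul_eq_mul, ← smul_monomial]
  refine Submodule.smul_mem _ _ (Submodule.subset_span ⟨Finsupp.toMultiset u, ?_, ?_⟩)
  · rw [Finsupp.card_toMultiset]
    exact (hH.degree_eq_sum_deg_support hu).symm
  · rw [multisetMonomial, Finsupp.toMultiset_toFinsupp]

end Polynomial

lemma exists_multiset_map_eq {α β : Type*} {f : α → β} {s : Multiset β}
    (h : ∀ b ∈ s, b ∈ Set.range f) : ∃ t : Multiset α, t.map f = s := by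
  induction s using Multiset.induction with
  | empty => exact ⟨0, rfl⟩
  | cons b s ih =>
    obtain ⟨a, rfl⟩ := h b (Multiset.mem_cons_self b s)
    obtain ⟨t, rfl⟩ := ih fun b hb => h b (Multiset.mem_cons_of_mem hb)
    exact ⟨a ::ₘ t, Multiset.map_cons f a t⟩

lemma exists_forms_of_choose_le {m e r : ℕ} (K : Type*) [Field K] [CharZero K] (he : 2 ≤ e)
    (h : (m + e).choose (e + 1) ≤ m * r) :
    ∃ L F : Fin r → MvPolynomial (Fin (m + r)) K,
      (∀ i, (L i).IsHomogeneous 1) ∧ (∀ i, (F i).IsHomogeneous e) ∧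
      ∀ H : MvPolynomial (Fin (m + r)) K, H.IsHomogeneous (e + 1) →
        H ∈ Ideal.span (Set.range L ∪ Set.range F) := by
  obtain ⟨F, hF⟩ := exists_tuple_forall_eq_zero (σ := Fin m) K (r := r) he (by simpa using h)
  let P : Fin r → MvPolynomial (Fin (m + r)) K := fun j =>
    ∑ s : Sym (Fin m) e, F j s • multisetMonomial K ((s : Multiset (Fin m)).map (Fin.castAdd r))
  let L : Fin r → MvPolynomial (Fin (m + r)) K := fun i => X (Fin.natAdd m i)
  refine ⟨L, P, fun i => isHomogeneous_X _ _, fun j => ?_, fun H hH => ?_⟩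
  · refine IsHomogeneous.sum _ _ _ fun s _ => ?_
    rw [smul_eq_C_mul]
    refine IsHomogeneous.C_mul ?_ _
    simpa using multisetMonomial_isHomogeneous (R := K)
      ((s : Multiset (Fin m)).map (Fin.castAdd r))
  set I := Ideal.span (Set.range L ∪ Set.range P) with hI
  by_contra hHI
  obtain ⟨ψ, hψH, hψI⟩ := Submodule.exists_le_ker_of_notMem
    (p := I.restrictScalars K) (v := H) hHI
  have hψ : ∀ f ∈ I, ψ f = 0 := fun f hf => hψI hf
  have hzero := hF (fun t => ψ (multisetMonomial K ((t : Multiset (Fin m)).map (Fin.castAdd r))))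
    fun j a => by
      have hmem : X (Fin.castAdd r a) * P j ∈ I :=
        I.mul_mem_left _ (Ideal.subset_span (Or.inr ⟨j, rfl⟩))
      rw [← hψ _ hmem]
      simp [P, Finset.mul_sum, map_sum, dotProduct, contract, Sym.coe_cons, multisetMonomial_cons]
  refine hψH ?_
  have hle : Submodule.span K {f | ∃ s : Multiset (Fin (m + r)),
      Multiset.card s = e + 1 ∧ f = multisetMonomial K s} ≤ LinearMap.ker ψ := by
    rw [Submodule.span_le]
    rintro _ ⟨s, hs, rfl⟩
    by_cases hL : ∃ i : Fin r, Fin.natAdd m i ∈ s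
    · obtain ⟨i, hi⟩ := hL
      obtain ⟨u, rfl⟩ := Multiset.exists_cons_of_mem hi
      refine hψ _ ?_
      rw [multisetMonomial_cons]
      exact I.mul_mem_right _ (Ideal.subset_span (Or.inl ⟨i, rfl⟩))
    · have hlift : ∃ t : Multiset (Fin m), t.map (Fin.castAdd r) = s := by
        refine exists_multiset_map_eq fun a ha => ?_
        induction a using Fin.addCases with
        | left a => exact ⟨a, rfl⟩
        | right i => exact absurd ⟨i, ha⟩ hL
      obtain ⟨t, rfl⟩ := hlift
      exact congrFun hzero ⟨t, by simpa using hs⟩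
  exact hle (IsHomogeneous.mem_span_multisetMonomial hH)

lemma homogeneousComponent_add_mul {τ R : Type*} [CommSemiring R] {e : ℕ} {G : MvPolynomial τ R}
    (hG : G.IsHomogeneous e) (p : MvPolynomial τ R) (i : ℕ) :
    homogeneousComponent (i + e) (p * G) = homogeneousComponent i p * G := by
  let _ := gradedAlgebra (σ := τ) (R := R)
  have h := DirectSum.coe_decompose_mul_add_of_right_mem (homogeneousSubmodule τ R) (i := i)
    (a := p) ((mem_homogeneousSubmodule e G).2 hG)
  rw [← decomposition.decompose'_apply, ← decomposition.decompose'_apply]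
  exact h

lemma exists_eq_sum_smul_X {τ R : Type*} [Fintype τ] [CommSemiring R] {p : MvPolynomial τ R}
    (hp : p.IsHomogeneous 1) : ∃ c : τ → R, p = ∑ i, c i • X i := by
  have h : p ∈ Submodule.span R (Set.range X) := by
    rw [← homogeneousSubmodule_one_eq_span_X]
    exact hp
  obtain ⟨c, hc⟩ := (Submodule.mem_span_range_iff_exists_fun R).1 h
  exact ⟨c, hc.symm⟩

lemma choose_le_of_forall_mem_span {m e r : ℕ} {K : Type*} [Field K]
    {G : Fin r → MvPolynomial (Fin m) K} (hG : ∀ j, (G j).IsHomogeneous e)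
    (h : ∀ H : MvPolynomial (Fin m) K, H.IsHomogeneous (e + 1) → H ∈ Ideal.span (Set.range G)) :
    (m + e).choose (e + 1) ≤ m * r := by
  let T : (Fin r × Fin m → K) →ₗ[K] (Sym (Fin m) (e + 1) → K) :=
    LinearMap.pi fun s => lcoeff K (Multiset.toFinsupp (s : Multiset (Fin m))) ∘ₗ
      Fintype.linearCombination K fun x => X x.2 * G x.1
  have hT : Function.Surjective T := by
    intro v
    set H : MvPolynomial (Fin m) K :=
      ∑ s : Sym (Fin m) (e + 1), v s • multisetMonomial K (s : Multiset (Fin m)) with hH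
    have hHhom : H.IsHomogeneous (e + 1) := by
      refine IsHomogeneous.sum _ _ _ fun s _ => ?_
      rw [smul_eq_C_mul]
      refine IsHomogeneous.C_mul ?_ _
      simpa using multisetMonomial_isHomogeneous (R := K) (s : Multiset (Fin m))
    obtain ⟨p, hp⟩ := Ideal.mem_span_range_iff_exists_fun.1 (h H hHhom)
    choose c hc using fun j => exists_eq_sum_smul_X
      (homogeneousComponent_isHomogeneous 1 (p j))
    refine ⟨fun x => c x.1 x.2, ?_⟩
    have hsum : Fintype.linearCombination K (fun x : Fin r × Fin m => X x.2 * G x.1)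
        (fun x => c x.1 x.2) = H := by
      rw [← homogeneousComponent_eq_self hHhom, ← hp, map_sum, Fintype.linearCombination_apply,
        Fintype.sum_prod_type]
      refine Finset.sum_congr rfl fun j _ => ?_
      rw [add_comm e 1, homogeneousComponent_add_mul (hG j), hc j, Finset.sum_mul]
      simp only [smul_mul_assoc]
    funext s
    change coeff (Multiset.toFinsupp (s : Multiset (Fin m)))
      (Fintype.linearCombination K (fun x : Fin r × Fin m => X x.2 * G x.1)
        (fun x => c x.1 x.2)) = v s
    rw [hsum, hH, coeff_sum, Finset.sum_eq_single s]
    · simp [multisetMonomial]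
    · intro t _ hts
      have : (t : Multiset (Fin m)) ≠ s := fun h => hts (Sym.coe_injective h)
      simp [multisetMonomial, coeff_monomial, this]
    · simp
  have := card_le_of_surjective K T hT
  rw [Sym.card_sym_eq_choose, Fintype.card_prod, Fintype.card_fin, Fintype.card_fin] at this
  rw [mul_comm]
  exact this

lemma choose_le_of_linear_forms {m e r : ℕ} {K : Type*} [Field K]
    {L F : Fin r → MvPolynomial (Fin (m + r)) K} (hL : ∀ i, (L i).IsHomogeneous 1)
    (hF : ∀ i, (F i).IsHomogeneous e)
    (h : ∀ H : MvPolynomial (Fin (m + r)) K, H.IsHomogeneous (e + 1) →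
      H ∈ Ideal.span (Set.range L ∪ Set.range F)) :
    (m + e).choose (e + 1) ≤ m * r := by
  choose c hc using fun k => exists_eq_sum_smul_X (hL k)
  let C : Matrix (Fin r) (Fin (m + r)) K := Matrix.of c
  have hker : m ≤ Module.finrank K (LinearMap.ker C.mulVecLin) := by
    have h1 := C.mulVecLin.finrank_range_add_finrank_ker
    have h2 := (LinearMap.range C.mulVecLin).finrank_le
    rw [Module.finrank_fintype_fun_eq_card, Fintype.card_fin] at h1 h2
    omega
  obtain ⟨v, hv⟩ := exists_linearIndependent_of_le_finrank hker
  let A : Matrix (Fin (m + r)) (Fin m) K := Matrix.of fun i a => (v a : Fin (m + r) → K) i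
  have hA : Function.Injective A.mulVec :=
    Matrix.mulVec_injective_iff.2 (hv.map' _ (Submodule.ker_subtype _))
  obtain ⟨B, hB⟩ := exists_mul_eq_one_of_mulVec_injective hA
  have hCA : C * A = 0 := by
    ext k a
    exact congrFun (LinearMap.mem_ker.1 (v a).2) k
  let π : MvPolynomial (Fin (m + r)) K →ₐ[K] MvPolynomial (Fin m) K :=
    aeval fun i => ∑ a, A i a • X a
  let ρ : MvPolynomial (Fin m) K →ₐ[K] MvPolynomial (Fin (m + r)) K :=
    aeval fun a => ∑ i, B a i • X i
  have hlin : ∀ {ι κ : Type} [Fintype ι] [Fintype κ] (x : ι → K) (N : Matrix ι κ K),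
      ∑ i, x i • ∑ a, N i a • (X a : MvPolynomial κ K) = ∑ a, (∑ i, x i * N i a) • X a := by
    intro ι κ _ _ x N
    simp only [Finset.smul_sum, Finset.sum_smul, smul_smul]
    exact Finset.sum_comm
  have hhom : ∀ {ι κ : Type} [Fintype κ] (N : Matrix ι κ K) (i : ι),
      (∑ a, N i a • (X a : MvPolynomial κ K)).IsHomogeneous 1 := by
    intro ι κ _ N i
    refine IsHomogeneous.sum _ _ _ fun a _ => ?_
    rw [smul_eq_C_mul]
    exact isHomogeneous_C_mul_X _ _
  have hπL : ∀ k, π (L k) = 0 := by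
    intro k
    rw [hc k, map_sum]
    simp only [map_smul, π, aeval_X]
    rw [hlin]
    refine Finset.sum_eq_zero fun a _ => ?_
    have : ∑ i, c k i * A i a = 0 := congrFun (congrFun hCA k) a
    rw [this, zero_smul]
  have hπρ : ∀ H, π (ρ H) = H := by
    have : π.comp ρ = AlgHom.id K _ := by
      refine algHom_ext fun a => ?_
      simp only [AlgHom.comp_apply, ρ, aeval_X, map_sum, map_smul, π, AlgHom.id_apply]
      rw [hlin]
      have : ∀ b, ∑ i, B a i * A i b = (1 : Matrix (Fin m) (Fin m) K) a b := fun b =>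
        congrFun (congrFun hB a) b
      simp [this, Matrix.one_apply]
    exact fun H => congrArg (fun f => f H) this
  refine choose_le_of_forall_mem_span (G := fun j => π (F j)) (fun j => ?_) fun H hH => ?_
  · simpa only [one_mul] using (hF j).aeval _ (hhom A)
  · have hmem := h (ρ H) (by simpa only [one_mul] using hH.aeval _ (hhom B))
    have hle : Ideal.span (Set.range L ∪ Set.range F) ≤
        (Ideal.span (Set.range fun j => π (F j))).comap π := by
      rw [Ideal.span_le]
      rintro _ (⟨k, rfl⟩ | ⟨j, rfl⟩)
      · simp [hπL]
      · exact Ideal.subset_span ⟨j, rfl⟩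
    have := hle hmem
    rwa [Ideal.mem_comap, hπρ] at this

/-- Proposition 5.4: for `d > 2` and `r ≤ n`, there exist linear forms
`L₁,…,L_r` and forms `F₁,…,F_r` of degree `d−1` in `ℂ[x₀,…,xₙ]` whose ideal contains
every form of degree `d` iff `binom(n−r+d, d) ≤ (n−r+1)r`. -/
theorem stmt_16 (n r d : ℕ) (hd : 2 < d) (hr : 0 < r) (hrn : r ≤ n) :
    (∃ L F : Fin r → MvPolynomial (Fin (n + 1)) ℂ,
      (∀ i, (L i).IsHomogeneous 1) ∧ (∀ i, (F i).IsHomogeneous (d - 1)) ∧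
      ∀ H : MvPolynomial (Fin (n + 1)) ℂ, H.IsHomogeneous d →
        H ∈ Ideal.span (Set.range L ∪ Set.range F)) ↔
    (n - r + d).choose d ≤ (n - r + 1) * r := by
  obtain ⟨e, rfl⟩ : ∃ e, d = e + 1 := ⟨d - 1, by omega⟩
  obtain ⟨m, hm⟩ : ∃ m, m = n - r + 1 := ⟨_, rfl⟩
  have hn : n + 1 = m + r := by omega
  rw [Nat.add_sub_cancel, hn, ← hm, show n - r + (e + 1) = m + e by omega]
  constructor
  · rintro ⟨L, F, hL, hF, h⟩
    exact choose_le_of_linear_forms hL hF h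
  · exact exists_forms_of_choose_le ℂ (by omega)
end

section
/- For every form F of degree d in ℂ[x,y,z] and every 0 < a < d, there exist forms F₁, F₂ of degree a and G₁, G₂ of degree d − a such that F = F₁G₁ + F₂G₂. -/
open MvPolynomial

section Grading

variable {σ R : Type*} [CommRing R]

/-- The homomorphism `p ↦ p(T x)`, which records homogeneous components as coefficients. -/
noncomputable def gradingHom : MvPolynomial σ R →ₐ[R] Polynomial (MvPolynomial σ R) :=
  aeval fun i => Polynomial.C (X i) * Polynomial.X

lemma gradingHom_monomial (m : σ →₀ ℕ) (c : R) :
    gradingHom (monomial m c) = Polynomial.monomial m.degree (monomial m c) := by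
  classical
  induction m using Finsupp.induction_linear generalizing c with
  | zero =>
    simp only [map_zero, Polynomial.monomial_zero_left]
    exact AlgHom.commutes gradingHom c
  | add f g hf hg =>
    have h : monomial (f + g) c = monomial f c * monomial g (1 : R) := by
      rw [monomial_mul, mul_one]
    rw [h, map_mul, hf, hg, Polynomial.monomial_mul_monomial, map_add]
  | single i n =>
    have h : monomial (Finsupp.single i n) c = C c * X i ^ n := by
      rw [C_mul_X_pow_eq_monomial]
    rw [h, map_mul, map_pow]
    have h1 : gradingHom (C c : MvPolynomial σ R) = Polynomial.C (C c) :=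
      AlgHom.commutes gradingHom c
    have h2 : gradingHom (X i : MvPolynomial σ R) = Polynomial.C (X i) * Polynomial.X := by
      simp [gradingHom]
    rw [h1, h2, mul_pow, ← Polynomial.C_pow, ← mul_assoc, ← Polynomial.C_mul,
      Polynomial.C_mul_X_pow_eq_monomial, Finsupp.degree_single]

lemma coeff_gradingHom (p : MvPolynomial σ R) (k : ℕ) :
    (gradingHom p).coeff k = homogeneousComponent k p := by
  classical
  induction p using MvPolynomial.induction_on' with
  | monomial m c =>
    rw [gradingHom_monomial, Polynomial.coeff_monomial,
      homogeneousComponent_of_mem (isHomogeneous_monomial (n := m.degree) c rfl)]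
    simp [eq_comm]
  | add p q hp hq => simp [hp, hq]

lemma gradingHom_of_isHomogeneous {p : MvPolynomial σ R} {n : ℕ} (hp : p.IsHomogeneous n) :
    gradingHom p = Polynomial.C p * Polynomial.X ^ n := by
  classical
  ext1 k
  rw [coeff_gradingHom, homogeneousComponent_of_mem hp, Polynomial.coeff_C_mul_X_pow]

lemma homogeneousComponent_mul_of_isHomogeneous {p q : MvPolynomial σ R} {k : ℕ}
    (hq : q.IsHomogeneous k) (n : ℕ) :
    homogeneousComponent (n + k) (p * q) = homogeneousComponent n p * q := by
  rw [← coeff_gradingHom, map_mul, gradingHom_of_isHomogeneous hq, ← mul_assoc,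
    Polynomial.coeff_mul_X_pow, Polynomial.coeff_mul_C, coeff_gradingHom]

lemma isHomogeneous_factors [IsDomain R] {p q : MvPolynomial σ R} {n : ℕ}
    (h : (p * q).IsHomogeneous n) (h0 : p * q ≠ 0) :
    ∃ i j, i + j = n ∧ p.IsHomogeneous i ∧ q.IsHomogeneous j := by
  have hprod : gradingHom p * gradingHom q = Polynomial.C (p * q) * Polynomial.X ^ n := by
    rw [← map_mul, gradingHom_of_isHomogeneous h]
  have hne : gradingHom p * gradingHom q ≠ 0 := by
    rw [hprod]
    exact mul_ne_zero (by simpa using h0) (pow_ne_zero _ Polynomial.X_ne_zero)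
  have hp := left_ne_zero_of_mul hne
  have hq := right_ne_zero_of_mul hne
  have hdeg := congrArg Polynomial.natDegree hprod
  have htr := congrArg Polynomial.natTrailingDegree hprod
  rw [Polynomial.natDegree_mul hp hq, Polynomial.natDegree_C_mul_X_pow _ _ h0] at hdeg
  rw [Polynomial.natTrailingDegree_mul hp hq, Polynomial.C_mul_X_pow_eq_monomial,
    Polynomial.natTrailingDegree_monomial h0] at htr
  have hp' := Polynomial.natTrailingDegree_le_natDegree (gradingHom p)
  have hq' := Polynomial.natTrailingDegree_le_natDegree (gradingHom q)
  have key : ∀ f : MvPolynomial σ R,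
      (gradingHom f).natTrailingDegree = (gradingHom f).natDegree →
      f.IsHomogeneous (gradingHom f).natDegree := by
    intro f hf
    have : homogeneousComponent (gradingHom f).natDegree f = f := by
      conv_rhs => rw [← sum_homogeneousComponent f]
      symm
      by_cases hmem : (gradingHom f).natDegree ∈ Finset.range (f.totalDegree + 1)
      · refine Finset.sum_eq_single_of_mem _ hmem fun k _ hk => ?_
        rw [← coeff_gradingHom]
        rcases lt_or_gt_of_ne hk with hk | hk
        · exact Polynomial.coeff_eq_zero_of_lt_natTrailingDegree (hf ▸ hk)
        · exact Polynomial.coeff_eq_zero_of_natDegree_lt hk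
      · rw [homogeneousComponent_eq_zero _ _ (by simpa using hmem)]
        refine Finset.sum_eq_zero fun k hk => ?_
        rw [← coeff_gradingHom]
        have : k ≠ (gradingHom f).natDegree := fun e => hmem (e ▸ hk)
        rcases lt_or_gt_of_ne this with hk | hk
        · exact Polynomial.coeff_eq_zero_of_lt_natTrailingDegree (hf ▸ hk)
        · exact Polynomial.coeff_eq_zero_of_natDegree_lt hk
    rw [← this]
    have h2 := homogeneousComponent_isHomogeneous (gradingHom f).natDegree f
    rwa [this] at h2 ⊢
  exact ⟨_, _, hdeg, key p (by omega), key q (by omega)⟩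

end Grading

open Polynomial in
/-- Restriction to the line `x = r y`, in the chart `y = 1`. -/
noncomputable def lineEval (r : ℂ) : MvPolynomial (Fin 3) ℂ →ₐ[ℂ] ℂ[X] :=
  MvPolynomial.aeval ![Polynomial.C r, 1, Polynomial.X]

/-- The linear form defining the line `x = r y`. -/
noncomputable def lineForm (r : ℂ) : MvPolynomial (Fin 3) ℂ := X 0 - C r * X 1

open Polynomial in
/-- Homogenization in degree `n` of a polynomial in `z`, using the variable `y`. -/
noncomputable def lineHomogenize (n : ℕ) : ℂ[X] →ₗ[ℂ] MvPolynomial (Fin 3) ℂ :=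
  ∑ i ∈ Finset.range (n + 1),
    (LinearMap.toSpanSingleton ℂ _ (MvPolynomial.X 2 ^ i * MvPolynomial.X 1 ^ (n - i))).comp
      (Polynomial.lcoeff ℂ i)

open Polynomial in
lemma lineHomogenize_apply (n : ℕ) (p : ℂ[X]) :
    lineHomogenize n p = ∑ i ∈ Finset.range (n + 1),
      p.coeff i • (MvPolynomial.X 2 ^ i * MvPolynomial.X 1 ^ (n - i) :
        MvPolynomial (Fin 3) ℂ) := by
  simp [lineHomogenize, LinearMap.sum_apply]

lemma lineForm_isHomogeneous (r : ℂ) : (lineForm r).IsHomogeneous 1 :=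
  (isHomogeneous_X _ _).sub (isHomogeneous_C_mul_X _ _)

lemma lineEval_lineForm (r s : ℂ) : lineEval r (lineForm s) = Polynomial.C (r - s) := by
  simp [lineEval, lineForm]

lemma lineForm_ne_zero (r : ℂ) : lineForm r ≠ 0 := by
  intro h
  have := lineEval_lineForm (r + 1) r
  rw [h, map_zero, eq_comm, Polynomial.C_eq_zero] at this
  simp at this

lemma lineHomogenize_isHomogeneous (n : ℕ) (p : Polynomial ℂ) :
    (lineHomogenize n p).IsHomogeneous n := by
  rw [lineHomogenize_apply]
  refine IsHomogeneous.sum _ _ _ fun i hi => ?_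
  rw [smul_eq_C_mul]
  refine IsHomogeneous.C_mul ?_ _
  have := (isHomogeneous_X_pow (R := ℂ) (2 : Fin 3) i).mul
    (isHomogeneous_X_pow (R := ℂ) (1 : Fin 3) (n - i))
  rwa [Nat.add_sub_cancel' (by simpa [Nat.lt_succ_iff] using hi)] at this

lemma lineEval_lineHomogenize (r : ℂ) {n : ℕ} {p : Polynomial ℂ} (hp : p.natDegree ≤ n) :
    lineEval r (lineHomogenize n p) = p := by
  rw [lineHomogenize_apply, map_sum]
  conv_rhs => rw [Polynomial.as_sum_range' p (n + 1) (by omega)]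
  refine Finset.sum_congr rfl fun i _ => ?_
  simp [lineEval, Polynomial.smul_eq_C_mul, Polynomial.C_mul_X_pow_eq_monomial]

lemma lineEval_monomial (r : ℂ) (m : Fin 3 →₀ ℕ) (c : ℂ) :
    lineEval r (monomial m c) = Polynomial.monomial (m 2) (c * r ^ m 0) := by
  have : (algebraMap ℂ (Polynomial ℂ)) c = Polynomial.C c := rfl
  rw [lineEval, aeval_monomial, Finsupp.prod_fintype _ _ (by simp), Fin.prod_univ_three,
    ← Polynomial.C_mul_X_pow_eq_monomial, this]
  simp [mul_assoc]

lemma natDegree_lineEval_le (r : ℂ) {n : ℕ} {s : MvPolynomial (Fin 3) ℂ}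
    (hs : s.IsHomogeneous n) : (lineEval r s).natDegree ≤ n := by
  rw [s.as_sum, map_sum]
  refine Polynomial.natDegree_sum_le_of_forall_le _ _ fun m hm => ?_
  rw [lineEval_monomial]
  refine (Polynomial.natDegree_monomial_le _).trans ?_
  have := hs.degree_eq_sum_deg_support hm
  rw [this]
  exact (Finsupp.le_degree _ _)

lemma lineForm_dvd_sub_lineHomogenize (r : ℂ) {n : ℕ} {s : MvPolynomial (Fin 3) ℂ}
    (hs : s.IsHomogeneous n) : lineForm r ∣ s - lineHomogenize n (lineEval r s) := by
  have h : s - lineHomogenize n (lineEval r s) = ∑ m ∈ s.support,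
      (monomial m (coeff m s) - lineHomogenize n (lineEval r (monomial m (coeff m s)))) := by
    rw [Finset.sum_sub_distrib, ← map_sum, ← map_sum, ← s.as_sum]
  rw [h]
  refine Finset.dvd_sum fun m hm => ?_
  have hdeg : m 0 + m 1 + m 2 = n := by
    rw [hs.degree_eq_sum_deg_support hm, ← Fin.sum_univ_three, ← Finsupp.degree_eq_sum]
    rfl
  have h1 : lineHomogenize n (lineEval r (monomial m (coeff m s))) =
      C (coeff m s) * (C r ^ m 0) * (X 2 ^ m 2 * X 1 ^ (m 0 + m 1)) := by
    rw [lineEval_monomial, lineHomogenize_apply, Finset.sum_eq_single (m 2)]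
    · rw [Polynomial.coeff_monomial, if_pos rfl, smul_eq_C_mul, show n - m 2 = m 0 + m 1 by omega]
      simp
    · intro i _ hi
      rw [Polynomial.coeff_monomial, if_neg (Ne.symm hi), zero_smul]
    · intro h
      simp at h
      omega
  have h2 : monomial m (coeff m s) = C (coeff m s) * (X 0 ^ m 0 * X 1 ^ m 1 * X 2 ^ m 2) := by
    rw [monomial_eq, Finsupp.prod_fintype _ _ (by simp), Fin.prod_univ_three]
  have h3 : lineForm r ∣ X 0 ^ m 0 - (C r * X 1) ^ m 0 := sub_dvd_pow_sub_pow _ _ _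
  rw [h1, h2]
  refine (h3.mul_left (C (coeff m s) * X 1 ^ m 1 * X 2 ^ m 2)).trans (dvd_of_eq ?_)
  ring

/-- If `u, v` are forms of degree `k` without common zeros on the line `x = r y`, then modulo
the equation of the line they generate all forms of degree at least `2 k - 1`. -/
lemma exists_combination_mod_lineForm (r : ℂ) {k n : ℕ} (hn : 2 * k ≤ n + 2)
    {u v : MvPolynomial (Fin 3) ℂ} (hu : u.IsHomogeneous k) (hv : v.IsHomogeneous k)
    (hmonic : (lineEval r u).Monic) (hdeg : (lineEval r u).natDegree = k)
    (hcop : IsCoprime (lineEval r u) (lineEval r v))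
    {s : MvPolynomial (Fin 3) ℂ} (hs : s.IsHomogeneous (n + 1)) :
    ∃ α β γ : MvPolynomial (Fin 3) ℂ, γ.IsHomogeneous n ∧
      s = α * u + β * v + lineForm r * γ := by
  obtain ⟨A, B, hAB⟩ := hcop
  set U := lineEval r u with hU
  set V := lineEval r v with hV
  set W := lineEval r s with hW
  set β := (W * B) %ₘ U with hβ
  set α := W * A + ((W * B) /ₘ U) * V with hα
  have hsum : α * U + β * V = W := by
    have h1 := Polynomial.modByMonic_add_div (W * B) U
    rw [← hβ] at h1
    linear_combination V * h1 + W * hAB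
  have hβ' : β = 0 ∨ β.natDegree + 1 ≤ k := by
    by_cases h0 : β = 0
    · exact Or.inl h0
    · right
      have := Polynomial.natDegree_lt_natDegree h0 (Polynomial.degree_modByMonic_lt (W * B) hmonic)
      omega
  have hVdeg : V.natDegree ≤ k := natDegree_lineEval_le r hv
  have hWdeg : W.natDegree ≤ n + 1 := natDegree_lineEval_le r hs
  have hkn : k ≤ n + 1 := by omega
  have hβdeg : β.natDegree ≤ n + 1 - k := by
    rcases hβ' with h | h
    · simp [h]
    · omega
  have hβV : (β * V).natDegree ≤ n + 1 := by
    rcases hβ' with h | h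
    · simp [h]
    · exact Polynomial.natDegree_mul_le.trans (by omega)
  have hαdeg : α.natDegree ≤ n + 1 - k := by
    by_cases h0 : α = 0
    · simp [h0]
    have h1 : (α * U).natDegree ≤ n + 1 := by
      rw [show α * U = W - β * V by linear_combination hsum]
      exact (Polynomial.natDegree_sub_le _ _).trans (max_le hWdeg hβV)
    rw [Polynomial.natDegree_mul h0 hmonic.ne_zero] at h1
    omega
  have hhom : (s - (lineHomogenize (n + 1 - k) α * u + lineHomogenize (n + 1 - k) β * v)
      ).IsHomogeneous (n + 1) := by
    refine hs.sub (IsHomogeneous.add ?_ ?_)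
    · simpa [Nat.sub_add_cancel hkn] using (lineHomogenize_isHomogeneous (n + 1 - k) α).mul hu
    · simpa [Nat.sub_add_cancel hkn] using (lineHomogenize_isHomogeneous (n + 1 - k) β).mul hv
  have hzero : lineEval r
      (s - (lineHomogenize (n + 1 - k) α * u + lineHomogenize (n + 1 - k) β * v)) = 0 := by
    rw [map_sub, map_add, map_mul, map_mul, lineEval_lineHomogenize r hαdeg,
      lineEval_lineHomogenize r hβdeg, ← hU, ← hV, ← hW, hsum, sub_self]
  have hdvd := lineForm_dvd_sub_lineHomogenize r hhom
  rw [hzero, map_zero, sub_zero] at hdvd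
  obtain ⟨γ, hγ⟩ := hdvd
  refine ⟨_, _, γ, ?_, by rw [← hγ, add_sub_cancel]⟩
  by_cases h0 : γ = 0
  · rw [h0]; exact isHomogeneous_zero _ _ _
  rw [hγ] at hhom
  obtain ⟨i, j, hij, hi, hj⟩ := isHomogeneous_factors hhom (mul_ne_zero (lineForm_ne_zero r) h0)
  have := hi.inj_right (lineForm_isHomogeneous r) (lineForm_ne_zero r)
  rwa [show n = j by omega]

lemma isCoprime_lineEval {r : ℂ} {S : Finset ℂ} (hr : r ∉ S) {A B u v : MvPolynomial (Fin 3) ℂ}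
    {k : ℕ} (h : A * u + B * v = (-1) ^ k * ∏ t ∈ S, lineForm t) :
    IsCoprime (lineEval r u) (lineEval r v) := by
  have h1 : lineEval r A * lineEval r u + lineEval r B * lineEval r v =
      (-1) ^ k * ∏ t ∈ S, Polynomial.C (r - t) := by
    rw [← map_mul, ← map_mul, ← map_add, h]
    simp [lineEval_lineForm, map_prod]
  have hunit : IsUnit ((-1 : Polynomial ℂ) ^ k * ∏ t ∈ S, Polynomial.C (r - t)) := by
    rw [← map_prod]
    refine (isUnit_one.neg.pow k).mul (Polynomial.isUnit_C.2 (IsUnit.mk0 _ ?_))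
    rw [Finset.prod_ne_zero_iff]
    intro t ht h0
    exact hr (sub_eq_zero.1 h0 ▸ ht)
  obtain ⟨w, hw⟩ := hunit.exists_left_inv
  refine ⟨w * lineEval r A, w * lineEval r B, ?_⟩
  rw [← hw, ← h1]
  ring

/-- A product of `2 k` distinct concurrent lines is a determinant of forms of degree `k` which
generate all forms of degree `2 k`. -/
lemma exists_det_eq_prod_lineForm (k : ℕ) (S : Finset ℂ) (hS : S.card = 2 * k) :
    ∃ u₁ u₂ p₁ p₂ : MvPolynomial (Fin 3) ℂ,
      u₁.IsHomogeneous k ∧ u₂.IsHomogeneous k ∧ p₁.IsHomogeneous k ∧ p₂.IsHomogeneous k ∧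
      u₁ * p₂ - p₁ * u₂ = (-1) ^ k * ∏ t ∈ S, lineForm t ∧
      (∀ r, (lineEval r u₁).Monic ∧ (lineEval r u₁).natDegree = k) ∧
      ∀ s : MvPolynomial (Fin 3) ℂ, s.IsHomogeneous (2 * k) →
        ∃ c₁ c₂ c₃ c₄, s = c₁ * u₁ + c₂ * u₂ + c₃ * p₁ + c₄ * p₂ := by
  induction k generalizing S with
  | zero =>
    have : S = ∅ := by simpa using hS
    subst this
    refine ⟨1, 0, 0, 1, isHomogeneous_one _ _, isHomogeneous_zero _ _ _, isHomogeneous_zero _ _ _,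
      isHomogeneous_one _ _, by simp, by simp, fun s _ => ⟨s, 0, 0, 0, by simp⟩⟩
  | succ k ih =>
    obtain ⟨l, S₁, hl, rfl, hS₁⟩ := Finset.card_eq_succ.1 (show S.card = (2 * k + 1) + 1 by omega)
    obtain ⟨m, S₀, hm, rfl, hS₀⟩ := Finset.card_eq_succ.1 hS₁
    obtain ⟨u₁, u₂, p₁, p₂, hu₁, hu₂, hp₁, hp₂, hdet, hmon, hgen⟩ := ih S₀ hS₀
    have hdet' : (-u₂) * (X 2 * u₁ + lineForm m * p₁) + u₁ * (X 2 * u₂ + lineForm m * p₂) =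
        (-1) ^ k * ∏ t ∈ insert m S₀, lineForm t := by
      rw [Finset.prod_insert hm]
      linear_combination lineForm m * hdet
    have hstep : ∀ {u p : MvPolynomial (Fin 3) ℂ}, u.IsHomogeneous k → p.IsHomogeneous k →
        (X 2 * u + lineForm m * p).IsHomogeneous (k + 1) := by
      intro u p hu hp
      rw [add_comm k 1]
      exact ((isHomogeneous_X _ _).mul hu).add ((lineForm_isHomogeneous m).mul hp)
    have hstep' : ∀ {u : MvPolynomial (Fin 3) ℂ}, u.IsHomogeneous k →
        (lineForm l * u).IsHomogeneous (k + 1) := by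
      intro u hu
      rw [add_comm k 1]
      exact (lineForm_isHomogeneous l).mul hu
    have hmon' : ∀ r, (lineEval r (X 2 * u₁ + lineForm m * p₁)).Monic ∧
        (lineEval r (X 2 * u₁ + lineForm m * p₁)).natDegree = k + 1 := by
      intro r
      obtain ⟨h1, h2⟩ := hmon r
      have hX : lineEval r (X 2) = Polynomial.X := by simp [lineEval]
      have h3 : (Polynomial.X * lineEval r u₁).natDegree = k + 1 := by
        rw [Polynomial.natDegree_X_mul h1.ne_zero, h2]
      have h4 : (Polynomial.X * lineEval r u₁).Monic := Polynomial.monic_X.mul h1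
      have h5 : (Polynomial.C (r - m) * lineEval r p₁).natDegree < k + 1 :=
        ((Polynomial.natDegree_C_mul_le _ _).trans (natDegree_lineEval_le r hp₁)).trans_lt
          (Nat.lt_succ_self k)
      have h6 : (Polynomial.C (r - m) * lineEval r p₁).degree <
          (Polynomial.X * lineEval r u₁).degree :=
        Polynomial.degree_lt_degree (by rw [h3]; exact h5)
      rw [map_add, map_mul, map_mul, hX, lineEval_lineForm]
      refine ⟨h4.add_of_left h6, ?_⟩
      rw [Polynomial.natDegree_add_eq_left_of_degree_lt h6, h3]
    refine ⟨X 2 * u₁ + lineForm m * p₁, X 2 * u₂ + lineForm m * p₂, lineForm l * u₁,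
      lineForm l * u₂, hstep hu₁ hp₁, hstep hu₂ hp₂, hstep' hu₁, hstep' hu₂, ?_, hmon', ?_⟩
    · rw [Finset.prod_insert hl, pow_succ]
      linear_combination (-lineForm l) * hdet'
    · intro s hs
      obtain ⟨α, β, γ, hγ, rfl⟩ := exists_combination_mod_lineForm l (n := 2 * k + 1) (by omega)
        (hstep hu₁ hp₁) (hstep hu₂ hp₂) (hmon' l).1 (hmon' l).2 (isCoprime_lineEval hl hdet') hs
      obtain ⟨α', β', γ', hγ', rfl⟩ := exists_combination_mod_lineForm m (n := 2 * k) (by omega)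
        hu₁ hu₂ (hmon m).1 (hmon m).2
        (isCoprime_lineEval (A := p₂) (B := -p₁) hm (by rw [← hdet]; ring)) hγ
      obtain ⟨c₁, c₂, c₃, c₄, rfl⟩ := hgen γ' hγ'
      refine ⟨α + c₃ * lineForm l, β + c₄ * lineForm l, α' + lineForm m * c₁ - c₃ * X 2,
        β' + lineForm m * c₂ - c₄ * X 2, ?_⟩
      ring

/-- A product of distinct concurrent lines of degree at least `2 k` is of the form `U V + P Q`
with `U, P` of degree `k`, such that `U, P, V, Q` generate all forms of the same degree. -/
lemma exists_generating_decomposition (k : ℕ) (S T : Finset ℂ) (hS : S.card = 2 * k)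
    (hST : Disjoint S T) :
    ∃ U P V Q : MvPolynomial (Fin 3) ℂ,
      U.IsHomogeneous k ∧ P.IsHomogeneous k ∧
      V.IsHomogeneous (k + T.card) ∧ Q.IsHomogeneous (k + T.card) ∧
      U * V + P * Q = (∏ t ∈ S, lineForm t) * ∏ t ∈ T, lineForm t ∧
      ∀ s : MvPolynomial (Fin 3) ℂ, s.IsHomogeneous (2 * k + T.card) →
        ∃ c₁ c₂ c₃ c₄, s = c₁ * U + c₂ * P + c₃ * V + c₄ * Q := by
  obtain ⟨u₁, u₂, p₁, p₂, hu₁, hu₂, hp₁, hp₂, hdet, hmon, hgen⟩ :=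
    exists_det_eq_prod_lineForm k S hS
  have hG : (∏ t ∈ T, lineForm t).IsHomogeneous T.card := by
    simpa using IsHomogeneous.prod T lineForm (fun _ => 1) fun t _ => lineForm_isHomogeneous t
  have hsign : ((-1) ^ k : MvPolynomial (Fin 3) ℂ).IsHomogeneous 0 := by
    simpa using (isHomogeneous_one (Fin 3) ℂ).neg.pow k
  have hsq : ((-1) ^ k * (-1) ^ k : MvPolynomial (Fin 3) ℂ) = 1 := by
    rw [← mul_pow]; simp
  have hgen' : ∀ s : MvPolynomial (Fin 3) ℂ, s.IsHomogeneous (2 * k + T.card) →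
      ∃ c₁ c₂ c₃ c₄, s = c₁ * u₁ + c₂ * p₁ + c₃ * ((∏ t ∈ T, lineForm t) * p₂) +
        c₄ * ((∏ t ∈ T, lineForm t) * u₂) := by
    clear hG
    induction T using Finset.induction_on with
    | empty =>
      intro s hs
      obtain ⟨c₁, c₂, c₃, c₄, rfl⟩ := hgen s hs
      exact ⟨c₁, c₃, c₄, c₂, by rw [Finset.prod_empty]; ring⟩
    | insert l T hl ih =>
      intro s hs
      rw [Finset.card_insert_of_notMem hl, ← add_assoc] at hs
      rw [Finset.disjoint_insert_right] at hST
      obtain ⟨α, β, γ, hγ, rfl⟩ := exists_combination_mod_lineForm l (n := 2 * k + T.card)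
        (by omega) hu₁ hp₁ (hmon l).1 (hmon l).2
        (isCoprime_lineEval (A := p₂) (B := -u₂) hST.1 (by rw [← hdet]; ring)) hs
      obtain ⟨c₁, c₂, c₃, c₄, rfl⟩ := ih hST.2 γ hγ
      refine ⟨α + lineForm l * c₁, β + lineForm l * c₂, c₃, c₄, ?_⟩
      rw [Finset.prod_insert hl]
      ring
  refine ⟨u₁, p₁, (-1) ^ k * ((∏ t ∈ T, lineForm t) * p₂), -((-1) ^ k *
    ((∏ t ∈ T, lineForm t) * u₂)), hu₁, hp₁, ?_, ?_, ?_, fun s hs => ?_⟩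
  · simpa [add_comm] using hsign.mul (hG.mul hp₂)
  · simpa [add_comm] using (hsign.mul (hG.mul hu₂)).neg
  · linear_combination ((-1) ^ k * ∏ t ∈ T, lineForm t) * hdet +
      ((∏ t ∈ S, lineForm t) * ∏ t ∈ T, lineForm t) * hsq
  · obtain ⟨c₁, c₂, c₃, c₄, rfl⟩ := hgen' s hs
    refine ⟨c₁, c₂, (-1) ^ k * c₃, -((-1) ^ k * c₄), ?_⟩
    linear_combination (-(c₃ * (∏ t ∈ T, lineForm t) * p₂) -
      c₄ * (∏ t ∈ T, lineForm t) * u₂) * hsq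

section QuadraticMap

open Filter Topology

lemma exists_bilin_self_eq_of_surjective_normed {E G ι : Type*} [NormedAddCommGroup E]
    [NormedSpace ℂ E] [FiniteDimensional ℂ E] [NormedAddCommGroup G] [NormedSpace ℂ G]
    [FiniteDimensional ℂ G] (B : E →ₗ[ℂ] E →ₗ[ℂ] G) (e₀ : E)
    (hsurj : ∀ y, ∃ e, B e₀ e + B e e₀ = y) (s : Finset ι) (w : ι → ℕ) (g : ι → G)
    (h₀ : B e₀ e₀ = ∑ i ∈ s, (0 : ℂ) ^ w i • g i) :
    ∃ t : ℂ, t ≠ 0 ∧ ∃ e, B e e = ∑ i ∈ s, t ^ w i • g i := by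
  have : CompleteSpace E := FiniteDimensional.complete ℂ E
  have : CompleteSpace G := FiniteDimensional.complete ℂ G
  let B' : E →L[ℂ] E →L[ℂ] G :=
    LinearMap.toContinuousLinearMap ((LinearMap.toContinuousLinearMap).toLinearMap ∘ₗ B)
  have hB' : ∀ x y, B' x y = B x y := fun x y => rfl
  have hder := (B'.hasStrictFDerivAt (x := e₀)).clm_apply (hasStrictFDerivAt_id (𝕜 := ℂ) e₀)
  have hmap := hder.map_nhds_eq_of_surj (by
    refine LinearMap.range_eq_top.2 fun y => ?_
    obtain ⟨e, he⟩ := hsurj y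
    exact ⟨e, by simpa [hB'] using he⟩)
  have hrange : Set.range (fun e => B e e) ∈ 𝓝 (∑ i ∈ s, (0 : ℂ) ^ w i • g i) := by
    rw [← h₀]
    have : Set.range (fun e => B e e) ∈ map (fun e => B' e (id e)) (𝓝 e₀) := by
      rw [Filter.mem_map]
      exact univ_mem' fun e => ⟨e, rfl⟩
    rw [hmap] at this
    exact this
  have hcont : Continuous fun t : ℂ => ∑ i ∈ s, t ^ w i • g i := by fun_prop
  have hev : ∀ᶠ t : ℂ in 𝓝[≠] 0, (∑ i ∈ s, t ^ w i • g i) ∈ Set.range (fun e => B e e) :=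
    (hcont.continuousAt.eventually_mem hrange).filter_mono nhdsWithin_le_nhds
  obtain ⟨t, ⟨e, he⟩, ht⟩ := (hev.and self_mem_nhdsWithin).exists
  exact ⟨t, ht, e, he⟩

/-- If the differential of `e ↦ B e e` is surjective at `e₀`, then a polynomial curve through
`B e₀ e₀` meets the image of this map in another parameter value. -/
lemma exists_bilin_self_eq_of_surjective {E G ι : Type*} [AddCommGroup E] [Module ℂ E]
    [FiniteDimensional ℂ E] [AddCommGroup G] [Module ℂ G] [FiniteDimensional ℂ G]
    (B : E →ₗ[ℂ] E →ₗ[ℂ] G) (e₀ : E)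
    (hsurj : ∀ y, ∃ e, B e₀ e + B e e₀ = y) (s : Finset ι) (w : ι → ℕ) (g : ι → G)
    (h₀ : B e₀ e₀ = ∑ i ∈ s, (0 : ℂ) ^ w i • g i) :
    ∃ t : ℂ, t ≠ 0 ∧ ∃ e, B e e = ∑ i ∈ s, t ^ w i • g i := by
  let φ := (Module.finBasis ℂ E).equivFun
  let ψ := (Module.finBasis ℂ G).equivFun
  let B' := (B.compl₁₂ φ.symm.toLinearMap φ.symm.toLinearMap).compr₂ ψ.toLinearMap
  have hB' : ∀ x y, B' x y = ψ (B (φ.symm x) (φ.symm y)) := fun x y => rfl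
  obtain ⟨t, ht, e, he⟩ := exists_bilin_self_eq_of_surjective_normed B' (φ e₀) (fun y => by
    obtain ⟨e, he⟩ := hsurj (ψ.symm y)
    refine ⟨φ e, ?_⟩
    rw [hB', hB', ← map_add, φ.symm_apply_apply, φ.symm_apply_apply, he, ψ.apply_symm_apply])
    s w (fun i => ψ (g i)) (by
      rw [hB', φ.symm_apply_apply, h₀, map_sum]
      simp only [map_smul])
  refine ⟨t, ht, φ.symm e, ψ.injective ?_⟩
  rw [← hB', he, map_sum]
  simp only [map_smul]

end QuadraticMap

instance finiteDimensional_homogeneousSubmodule {σ : Type*} [Finite σ] (n : ℕ) :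
    FiniteDimensional ℂ (homogeneousSubmodule σ ℂ n) :=
  Module.Finite.iff_fg.2 (homogeneousSubmodule_fg σ ℂ n)

/-- `F` is a sum of two products of forms of degrees `a` and `b`. -/
def IsSumOfTwoProducts (a b : ℕ) (F : MvPolynomial (Fin 3) ℂ) : Prop :=
  ∃ F₁ F₂ G₁ G₂ : MvPolynomial (Fin 3) ℂ,
    F₁.IsHomogeneous a ∧ F₂.IsHomogeneous a ∧ G₁.IsHomogeneous b ∧ G₂.IsHomogeneous b ∧
    F = F₁ * G₁ + F₂ * G₂

namespace IsSumOfTwoProducts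

lemma symm {a b : ℕ} {F : MvPolynomial (Fin 3) ℂ} (h : IsSumOfTwoProducts a b F) :
    IsSumOfTwoProducts b a F := by
  obtain ⟨F₁, F₂, G₁, G₂, h1, h2, h3, h4, rfl⟩ := h
  exact ⟨G₁, G₂, F₁, F₂, h3, h4, h1, h2, by ring⟩

lemma mul_left {a b c : ℕ} {F A : MvPolynomial (Fin 3) ℂ} (h : IsSumOfTwoProducts a b F)
    (hA : A.IsHomogeneous c) : IsSumOfTwoProducts (c + a) b (A * F) := by
  obtain ⟨F₁, F₂, G₁, G₂, h1, h2, h3, h4, rfl⟩ := h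
  exact ⟨A * F₁, A * F₂, G₁, G₂, hA.mul h1, hA.mul h2, h3, h4, by ring⟩

lemma mul {a b : ℕ} {A B : MvPolynomial (Fin 3) ℂ} (hA : A.IsHomogeneous a)
    (hB : B.IsHomogeneous b) : IsSumOfTwoProducts a b (A * B) :=
  ⟨A, 0, B, 0, hA, isHomogeneous_zero _ _ _, hB, isHomogeneous_zero _ _ _, by ring⟩

lemma aeval {a b : ℕ} {F : MvPolynomial (Fin 3) ℂ} (h : IsSumOfTwoProducts a b F)
    {g : Fin 3 → MvPolynomial (Fin 3) ℂ} (hg : ∀ i, (g i).IsHomogeneous 1) :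
    IsSumOfTwoProducts a b (MvPolynomial.aeval g F) := by
  obtain ⟨F₁, F₂, G₁, G₂, h1, h2, h3, h4, rfl⟩ := h
  exact ⟨_, _, _, _, by simpa using h1.aeval g hg, by simpa using h2.aeval g hg,
    by simpa using h3.aeval g hg, by simpa using h4.aeval g hg, by simp⟩

end IsSumOfTwoProducts

/-- The map `(U, P, V, Q), (U', P', V', Q') ↦ U V' + P Q'` on forms. -/
noncomputable def productPairing (a b d : ℕ) (h : a + b = d) :
    let E := (homogeneousSubmodule (Fin 3) ℂ a × homogeneousSubmodule (Fin 3) ℂ a) ×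
      (homogeneousSubmodule (Fin 3) ℂ b × homogeneousSubmodule (Fin 3) ℂ b)
    E →ₗ[ℂ] E →ₗ[ℂ] homogeneousSubmodule (Fin 3) ℂ d :=
  LinearMap.mk₂ ℂ
    (fun e e' => ⟨e.1.1 * e'.2.1 + e.1.2 * e'.2.2, by
      subst h
      exact (IsHomogeneous.mul e.1.1.2 e'.2.1.2).add (IsHomogeneous.mul e.1.2.2 e'.2.2.2)⟩)
    (fun _ _ _ => Subtype.ext (by simp; ring))
    (fun _ _ _ => Subtype.ext (by simp))
    (fun _ _ _ => Subtype.ext (by simp; ring))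
    (fun _ _ _ => Subtype.ext (by simp))

/-- A form whose restriction to the line `z = 0` vanishes at distinct points is a sum of two
products of forms. -/
lemma isSumOfTwoProducts_of_restriction {a b : ℕ} (hab : a ≤ b) {F : MvPolynomial (Fin 3) ℂ}
    (hF : F.IsHomogeneous (a + b)) {S : Finset ℂ} (hS : S.card = a + b)
    (hres : aeval ![X 0, X 1, 0] F = ∏ t ∈ S, lineForm t) : IsSumOfTwoProducts a b F := by
  obtain ⟨S₁, hS₁, hcard⟩ := Finset.exists_subset_card_eq (show 2 * a ≤ S.card by omega)
  have hcard' : (S \ S₁).card = b - a := by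
    rw [Finset.card_sdiff_of_subset hS₁]; omega
  obtain ⟨U, P, V, Q, hU, hP, hV, hQ, hsum, hgen⟩ :=
    exists_generating_decomposition a S₁ (S \ S₁) hcard Finset.disjoint_sdiff
  rw [mul_comm (∏ t ∈ S₁, lineForm t), Finset.prod_sdiff hS₁] at hsum
  rw [hcard', show a + (b - a) = b by omega] at hV hQ
  rw [hcard', show 2 * a + (b - a) = a + b by omega] at hgen
  let g : (Fin 3 →₀ ℕ) → homogeneousSubmodule (Fin 3) ℂ (a + b) := fun m =>
    if h : m ∈ F.support then
      ⟨monomial m (coeff m F), isHomogeneous_monomial _ (hF.degree_eq_sum_deg_support h).symm⟩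
    else 0
  have hcurve : ∀ t : ℂ, ((∑ m ∈ F.support, t ^ m 2 • g m :
      homogeneousSubmodule (Fin 3) ℂ (a + b)) : MvPolynomial (Fin 3) ℂ) =
      aeval ![X 0, X 1, C t * X 2] F := by
    intro t
    conv_rhs => rw [F.as_sum, map_sum]
    rw [AddSubmonoidClass.coe_finsetSum]
    refine Finset.sum_congr rfl fun m hm => ?_
    simp only [g, dif_pos hm, Submodule.coe_smul]
    rw [aeval_monomial, Finsupp.prod_fintype _ _ (by simp), monomial_eq,
      Finsupp.prod_fintype _ _ (by simp), Fin.prod_univ_three, Fin.prod_univ_three, smul_eq_C_mul]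
    simp [mul_pow, algebraMap_eq]
    ring
  obtain ⟨t, ht, e, he⟩ := exists_bilin_self_eq_of_surjective (productPairing a b (a + b) rfl)
    ((⟨U, hU⟩, ⟨P, hP⟩), (⟨V, hV⟩, ⟨Q, hQ⟩)) (fun y => by
      obtain ⟨c₁, c₂, c₃, c₄, hy⟩ := hgen y y.2
      refine ⟨((⟨_, homogeneousComponent_mem a c₃⟩, ⟨_, homogeneousComponent_mem a c₄⟩),
        (⟨_, homogeneousComponent_mem b c₁⟩, ⟨_, homogeneousComponent_mem b c₂⟩)),
        Subtype.ext ?_⟩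
      have h1 := homogeneousComponent_eq_self y.2
      rw [hy, map_add, map_add, map_add, homogeneousComponent_mul_of_isHomogeneous hV,
        homogeneousComponent_mul_of_isHomogeneous hQ, add_comm a b,
        homogeneousComponent_mul_of_isHomogeneous hU,
        homogeneousComponent_mul_of_isHomogeneous hP] at h1
      rw [hy, ← h1]
      simp only [productPairing, LinearMap.mk₂_apply, Submodule.coe_add]
      ring) F.support (fun m => m 2) g (by
      refine Subtype.ext ?_
      rw [hcurve, map_zero, zero_mul, hres, ← hsum]
      simp [productPairing])
  have hdec : IsSumOfTwoProducts a b (aeval ![X 0, X 1, C t * X 2] F) := by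
    rw [← hcurve t, ← he]
    exact ⟨e.1.1, e.1.2, e.2.1, e.2.2, e.1.1.2, e.1.2.2, e.2.1.2, e.2.2.2, rfl⟩
  have hback := hdec.aeval (g := ![X 0, X 1, C t⁻¹ * X 2]) (fun i => by
    fin_cases i
    · exact isHomogeneous_X _ _
    · exact isHomogeneous_X _ _
    · exact isHomogeneous_C_mul_X _ _)
  rw [← AlgHom.comp_apply, comp_aeval] at hback
  convert hback using 1
  conv_lhs => rw [← aeval_X_left_apply F]
  congr 2
  funext i
  fin_cases i
  · simp
  · simp
  · simp [algebraMap_eq, ← mul_assoc, ← C_mul, ht]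

lemma eval_smul_of_isHomogeneous {σ R : Type*} [CommRing R] {F : MvPolynomial σ R} {n : ℕ}
    (hF : F.IsHomogeneous n) (c : R) (v : σ → R) : eval (c • v) F = c ^ n * eval v F := by
  rw [eval_eq, eval_eq, Finset.mul_sum]
  refine Finset.sum_congr rfl fun m hm => ?_
  have h : n = ∑ i ∈ m.support, m i := hF.degree_eq_sum_deg_support hm
  simp only [Pi.smul_apply, smul_eq_mul, mul_pow, Finset.prod_mul_distrib]
  rw [Finset.prod_pow_eq_pow_sum, ← h]
  ring

lemma monic_finSuccEquiv {n d : ℕ} {F : MvPolynomial (Fin (n + 1)) ℂ} (hF : F.IsHomogeneous d)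
    (h1 : eval (Fin.cons 1 0) F = 1) :
    (finSuccEquiv ℂ n F).Monic ∧ (finSuccEquiv ℂ n F).natDegree = d := by
  have hle : (finSuccEquiv ℂ n F).natDegree ≤ d := by
    rw [natDegree_finSuccEquiv]
    exact (degreeOf_le_totalDegree _ _).trans hF.totalDegree_le
  have hcoeff : (finSuccEquiv ℂ n F).coeff d = 1 := by
    have hconst := (totalDegree_zero_iff_isHomogeneous _).2
      (hF.finSuccEquiv_coeff_isHomogeneous d 0 (add_zero d))
    rw [totalDegree_eq_zero_iff_eq_C] at hconst
    rw [eval_eq_eval_mv_eval', Polynomial.eval_eq_sum_range'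
      (lt_of_le_of_lt (Polynomial.natDegree_map_le.trans hle) (Nat.lt_succ_self d)),
      Finset.sum_range_succ, Finset.sum_eq_zero] at h1
    · rw [zero_add, Polynomial.coeff_map, hconst, eval_C, one_pow, mul_one] at h1
      rw [hconst, h1, C_1]
    · intro i hi
      have hi' : i < d := Finset.mem_range.1 hi
      have := (hF.finSuccEquiv_coeff_isHomogeneous i (d - i) (by omega)).coeff_eq_zero
        (d := 0) (by simp; omega)
      rw [Polynomial.coeff_map, ← coe_aeval_eq_eval]
      simp [constantCoeff_eq, this]
  have hdeg : (finSuccEquiv ℂ n F).natDegree = d :=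
    le_antisymm hle (Polynomial.le_natDegree_of_ne_zero (by rw [hcoeff]; exact one_ne_zero))
  exact ⟨by rw [Polynomial.Monic, Polynomial.leadingCoeff, hdeg, hcoeff], hdeg⟩

open Polynomial in
/-- A monic irreducible polynomial over a domain of characteristic zero has a Bézout relation
with its derivative, with a nonzero constant as right hand side. -/
lemma exists_bezout_derivative {A : Type*} [CommRing A] [IsDomain A] [IsIntegrallyClosed A]
    [CharZero A] {P : A[X]} (hm : P.Monic) (hP : Irreducible P) :
    ∃ D : A, D ≠ 0 ∧ ∃ α β : A[X], α * P + β * derivative P = Polynomial.C D := by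
  let K := FractionRing A
  have : CharZero K := charZero_of_injective_algebraMap (IsFractionRing.injective A K)
  have hirr := (hm.irreducible_iff_irreducible_map_fraction_map (K := K)).1 hP
  obtain ⟨x, y, hxy⟩ := hirr.separable
  obtain ⟨b, hb, hx⟩ := IsLocalization.integerNormalization_spec (nonZeroDivisors A) x
  obtain ⟨c, hc, hy⟩ := IsLocalization.integerNormalization_spec (nonZeroDivisors A) y
  set x' := IsLocalization.integerNormalization (nonZeroDivisors A) x
  set y' := IsLocalization.integerNormalization (nonZeroDivisors A) y
  refine ⟨b * c, mul_ne_zero (nonZeroDivisors.ne_zero hb) (nonZeroDivisors.ne_zero hc),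
    Polynomial.C c * x', Polynomial.C b * y', ?_⟩
  apply Polynomial.map_injective (algebraMap A K) (IsFractionRing.injective A K)
  rw [derivative_map] at hxy
  simp only [Polynomial.map_add, Polynomial.map_mul, Polynomial.map_C, hx, hy, map_mul]
  rw [algebra_compatible_smul K b, algebra_compatible_smul K c, Polynomial.smul_eq_C_mul,
    Polynomial.smul_eq_C_mul]
  linear_combination (Polynomial.C (algebraMap A K b) * Polynomial.C (algebraMap A K c)) * hxy

lemma exists_eval_ne_zero {σ : Type*} {F : MvPolynomial σ ℂ} (hF : F ≠ 0) :
    ∃ v, eval v F ≠ 0 := by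
  by_contra! h
  exact hF (MvPolynomial.funext fun v => by rw [h v, map_zero])

lemma isSumOfTwoProducts_of_irreducible_monic {a b : ℕ} (hab : a ≤ b)
    {F : MvPolynomial (Fin 3) ℂ} (hF : F.IsHomogeneous (a + b)) (hirr : Irreducible F)
    (h1 : eval ![1, 0, 0] F = 1) : IsSumOfTwoProducts a b F := by
  have hcons : (![1, 0, 0] : Fin 3 → ℂ) = Fin.cons 1 0 := by
    funext i; fin_cases i <;> rfl
  obtain ⟨hm, hdeg⟩ := monic_finSuccEquiv hF (hcons ▸ h1)
  have hirr' : Irreducible (finSuccEquiv ℂ 2 F) :=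
    (MulEquiv.irreducible_iff (finSuccEquiv ℂ 2)).2 hirr
  obtain ⟨D, hD, α, β, hαβ⟩ := exists_bezout_derivative hm hirr'
  obtain ⟨v, hv⟩ := exists_eval_ne_zero (mul_ne_zero (X_ne_zero (R := ℂ) (0 : Fin 2)) hD)
  rw [map_mul, eval_X] at hv
  have hv0 := left_ne_zero_of_mul hv
  have hvD := right_ne_zero_of_mul hv
  set p := (finSuccEquiv ℂ 2 F).map (eval v) with hp
  have hpm : p.Monic := hm.map _
  have hpdeg : p.natDegree = a + b := by rw [hp, hm.natDegree_map, hdeg]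
  have hsep : p.Separable := by
    have h := congrArg (Polynomial.map (eval v)) hαβ
    rw [Polynomial.map_add, Polynomial.map_mul, Polynomial.map_mul, ← Polynomial.derivative_map,
      Polynomial.map_C, ← hp] at h
    refine ⟨Polynomial.C (eval v D)⁻¹ * α.map (eval v),
      Polynomial.C (eval v D)⁻¹ * β.map (eval v), ?_⟩
    have h2 : Polynomial.C (eval v D)⁻¹ * Polynomial.C (eval v D) = 1 := by
      rw [← Polynomial.C_mul, inv_mul_cancel₀ hvD, Polynomial.C_1]
    linear_combination Polynomial.C (eval v D)⁻¹ * h + h2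
  have hnodup := Polynomial.nodup_roots hsep
  have hprod : ∀ z, p.eval z = ∏ t ∈ p.roots.toFinset, (z - t) := by
    intro z
    conv_lhs => rw [(IsAlgClosed.splits p).eq_prod_roots_of_monic hpm]
    rw [Polynomial.eval_multiset_prod, Multiset.map_map, Finset.prod, Multiset.toFinset_val,
      hnodup.dedup]
    simp
  have hcard : p.roots.toFinset.card = a + b := by
    rw [Multiset.toFinset_card_of_nodup hnodup, IsAlgClosed.card_roots_eq_natDegree, hpdeg]
  let g : Fin 3 → MvPolynomial (Fin 3) ℂ := ![X 0, C (v 0) * X 1, C (v 1) * X 1 + X 2]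
  let h : Fin 3 → MvPolynomial (Fin 3) ℂ :=
    ![X 0, C (v 0)⁻¹ * X 1, X 2 - C (v 1 * (v 0)⁻¹) * X 1]
  have hg : ∀ i, (g i).IsHomogeneous 1 := by
    intro i
    fin_cases i
    · exact isHomogeneous_X _ _
    · exact isHomogeneous_C_mul_X _ _
    · exact (isHomogeneous_C_mul_X _ _).add (isHomogeneous_X _ _)
  have hh : ∀ i, (h i).IsHomogeneous 1 := by
    intro i
    fin_cases i
    · exact isHomogeneous_X _ _
    · exact isHomogeneous_C_mul_X _ _
    · exact (isHomogeneous_X _ _).sub (isHomogeneous_C_mul_X _ _)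
  have hres : aeval ![X 0, X 1, 0] (aeval g F) = ∏ t ∈ p.roots.toFinset, lineForm t := by
    refine mul_left_cancel₀ (X_ne_zero (R := ℂ) (1 : Fin 3)) (MvPolynomial.funext fun y => ?_)
    rw [map_mul, map_mul, eval_X]
    by_cases hy : y 1 = 0
    · rw [hy, zero_mul, zero_mul]
    congr 1
    have hpoint : eval y (aeval ![X 0, X 1, 0] (aeval g F)) =
        eval (y 1 • Fin.cons (y 0 / y 1) v : Fin 3 → ℂ) F := by
      rw [← coe_aeval_eq_eval, ← coe_aeval_eq_eval, RingHom.coe_coe, RingHom.coe_coe,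
        ← AlgHom.comp_apply, ← AlgHom.comp_apply, comp_aeval, comp_aeval]
      congr 2
      funext i
      fin_cases i
      · simp [g]; field_simp
      · simp [g, mul_comm]
      · simp [g, mul_comm]
        exact mul_comm _ _
    rw [hpoint, eval_smul_of_isHomogeneous hF, eval_eq_eval_mv_eval', ← hp, hprod, map_prod,
      ← hcard, ← Finset.prod_const, ← Finset.prod_mul_distrib]
    refine Finset.prod_congr rfl fun t _ => ?_
    simp only [lineForm, map_sub, map_mul, eval_X, eval_C]
    field_simp
  have hdec := (isSumOfTwoProducts_of_restriction hab (by simpa using hF.aeval g hg)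
    hcard hres).aeval hh
  rw [← AlgHom.comp_apply, comp_aeval] at hdec
  convert hdec using 1
  conv_lhs => rw [← aeval_X_left_apply F]
  congr 2
  have hinv : (C (v 0) * C (v 0)⁻¹ : MvPolynomial (Fin 3) ℂ) = 1 := by
    rw [← C_mul, mul_inv_cancel₀ hv0, C_1]
  funext i
  fin_cases i
  · simp [g, h]
  · simp [g, h, algebraMap_eq, ← mul_assoc, hinv]
  · simp [g, h, algebraMap_eq, mul_assoc]

lemma isSumOfTwoProducts_of_irreducible {a b : ℕ} (hab : a ≤ b)
    {F : MvPolynomial (Fin 3) ℂ} (hF : F.IsHomogeneous (a + b)) (hirr : Irreducible F) :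
    IsSumOfTwoProducts a b F := by
  obtain ⟨v, hv⟩ := exists_eval_ne_zero (mul_ne_zero (X_ne_zero (R := ℂ) (0 : Fin 3)) hirr.ne_zero)
  rw [map_mul, eval_X] at hv
  have hv0 := left_ne_zero_of_mul hv
  set q : ℂ := v 1 / v 0
  set r : ℂ := v 2 / v 0
  have hc : eval ![1, q, r] F ≠ 0 := by
    have h : v = v 0 • ![1, q, r] := by
      funext i
      fin_cases i
      · simp
      · simp [q]; field_simp
      · simp [r]; field_simp
    rw [h, eval_smul_of_isHomogeneous hF] at hv
    exact right_ne_zero_of_mul (right_ne_zero_of_mul hv)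
  set c := eval ![1, q, r] F
  let g : Fin 3 → MvPolynomial (Fin 3) ℂ := ![X 0, C q * X 0 + X 1, C r * X 0 + X 2]
  let h : Fin 3 → MvPolynomial (Fin 3) ℂ := ![X 0, X 1 - C q * X 0, X 2 - C r * X 0]
  have hg : ∀ i, (g i).IsHomogeneous 1 := by
    intro i
    fin_cases i
    · exact isHomogeneous_X _ _
    · exact (isHomogeneous_C_mul_X _ _).add (isHomogeneous_X _ _)
    · exact (isHomogeneous_C_mul_X _ _).add (isHomogeneous_X _ _)
  have hh : ∀ i, (h i).IsHomogeneous 1 := by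
    intro i
    fin_cases i
    · exact isHomogeneous_X _ _
    · exact (isHomogeneous_X _ _).sub (isHomogeneous_C_mul_X _ _)
    · exact (isHomogeneous_X _ _).sub (isHomogeneous_C_mul_X _ _)
  have hgh : (aeval g).comp (aeval h) = AlgHom.id ℂ (MvPolynomial (Fin 3) ℂ) := by
    refine algHom_ext fun i => ?_
    fin_cases i <;> simp [g, h, algebraMap_eq]
  have hhg : (aeval h).comp (aeval g) = AlgHom.id ℂ (MvPolynomial (Fin 3) ℂ) := by
    refine algHom_ext fun i => ?_
    fin_cases i <;> simp [g, h, algebraMap_eq]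
  have hirr' : Irreducible (C c⁻¹ * aeval g F) := by
    rw [irreducible_isUnit_mul ((isUnit_iff_ne_zero.2 (inv_ne_zero hc)).map C)]
    exact (MulEquiv.irreducible_iff (AlgEquiv.ofAlgHom _ _ hgh hhg)).2 hirr
  have heval : eval ![1, 0, 0] (C c⁻¹ * aeval g F) = 1 := by
    rw [map_mul, eval_C]
    have : eval ![1, 0, 0] (aeval g F) = c := by
      rw [← coe_aeval_eq_eval, RingHom.coe_coe, ← AlgHom.comp_apply, comp_aeval]
      change _ = eval ![1, q, r] F
      rw [← coe_aeval_eq_eval, RingHom.coe_coe]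
      congr 2
      funext i
      fin_cases i <;> simp [g]
    rw [this, inv_mul_cancel₀ hc]
  have hhom : (aeval g F).IsHomogeneous (a + b) := by simpa using hF.aeval g hg
  have hdec := ((isSumOfTwoProducts_of_irreducible_monic hab (hhom.C_mul c⁻¹) hirr' heval).mul_left
    (isHomogeneous_C (Fin 3) c)).aeval hh
  rw [zero_add, ← mul_assoc, ← C_mul, mul_inv_cancel₀ hc, C_1, one_mul, ← AlgHom.comp_apply,
    hhg] at hdec
  exact hdec

lemma isUnit_of_isHomogeneous_zero {F : MvPolynomial (Fin 3) ℂ} (hF : F.IsHomogeneous 0)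
    (h0 : F ≠ 0) : IsUnit F := by
  rw [totalDegree_eq_zero_iff_eq_C.1 ((totalDegree_zero_iff_isHomogeneous _).2 hF)] at h0 ⊢
  exact (isUnit_iff_ne_zero.2 fun h => h0 (by rw [h, C_0])).map C

lemma isSumOfTwoProducts_of_isHomogeneous (d : ℕ) : ∀ a b : ℕ, 0 < a → 0 < b → a + b = d →
    ∀ F : MvPolynomial (Fin 3) ℂ, F.IsHomogeneous d → IsSumOfTwoProducts a b F := by
  induction d using Nat.strong_induction_on with
  | _ d ih =>
  intro a b ha hb hab F hF
  by_cases h0 : F = 0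
  · rw [h0, ← mul_zero (0 : MvPolynomial (Fin 3) ℂ)]
    exact .mul (isHomogeneous_zero _ _ _) (isHomogeneous_zero _ _ _)
  by_cases hirr : Irreducible F
  · subst hab
    rcases le_total a b with h | h
    · exact isSumOfTwoProducts_of_irreducible h hF hirr
    · exact (isSumOfTwoProducts_of_irreducible h (add_comm a b ▸ hF) hirr).symm
  have hnu : ¬ IsUnit F := by
    intro hu
    obtain ⟨G, hG⟩ := hu.exists_right_inv
    obtain ⟨i, j, hij, hi, -⟩ := isHomogeneous_factors (n := 0)
      (hG ▸ isHomogeneous_one (Fin 3) ℂ) (hG ▸ one_ne_zero)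
    have := hF.inj_right hi h0
    omega
  obtain ⟨A, B, hA, hB, rfl⟩ : ∃ A B, ¬ IsUnit A ∧ ¬ IsUnit B ∧ F = A * B := by
    by_contra! h
    refine hirr ⟨hnu, fun A B hAB => ?_⟩
    by_contra! hcon
    exact h A B hcon.1 hcon.2 hAB
  obtain ⟨i, j, hij, hAi, hBj⟩ := isHomogeneous_factors hF h0
  have hi : i ≠ 0 := by
    rintro rfl
    exact hA (isUnit_of_isHomogeneous_zero hAi (left_ne_zero_of_mul h0))
  have hj : j ≠ 0 := by
    rintro rfl
    exact hB (isUnit_of_isHomogeneous_zero hBj (right_ne_zero_of_mul h0))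
  rcases lt_trichotomy a j with h | h | h
  · have hdec := ((ih j (by omega) (j - a) a (by omega) ha (by omega) B hBj).mul_left hAi).symm
    rwa [show i + (j - a) = b by omega] at hdec
  · subst h
    rw [mul_comm]
    exact .mul hBj (by rwa [show b = i by omega])
  · have hdec := (ih i (by omega) (a - j) b (by omega) hb (by omega) A hAi).mul_left hBj
    rwa [show j + (a - j) = a by omega, mul_comm] at hdec

/-- every ternary form `F` of degree `d` and every `0 < a < d` admit a
decomposition `F = F₁G₁ + F₂G₂` with `deg Fᵢ = a`, `deg Gᵢ = d − a`. -/
theorem stmt_17 (d a : ℕ) (ha : 0 < a) (had : a < d)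
    (F : MvPolynomial (Fin 3) ℂ) (hF : F.IsHomogeneous d) :
    ∃ F1 F2 G1 G2 : MvPolynomial (Fin 3) ℂ,
      F1.IsHomogeneous a ∧ F2.IsHomogeneous a ∧
      G1.IsHomogeneous (d - a) ∧ G2.IsHomogeneous (d - a) ∧
      F = F1 * G1 + F2 * G2 := by
  exact isSumOfTwoProducts_of_isHomogeneous d a (d - a) ha (by omega) (by omega) F hF
end
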